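/- arXiv:1312.2153 — 3 statements merged into one kernel-verified Lean document; each statement's English description precedes it below -/
import Mathlib

section
/- For every y ∈ ℝ, lim_{n→∞} n·P(ρ_n|X| + √(1-ρ_n²)·Y > a_n·y + b_n) = 2e^{-y}. Consequently, lim_{n→∞} [P(ρ_n|X| + √(1-ρ_n²)·Y ≤ a_n·(y + ln 2) + b_n)]^n = Λ(y) = exp(-e^{-y}) for every y ∈ ℝ. -/
open MeasureTheory Filter Real Set ProbabilityTheory Topology

noncomputable def stdNormalCDF (t : ℝ) : ℝ :=
  (Real.sqrt (2 * Real.pi))⁻¹ * ∫ s in Set.Iic t, Real.exp (-(s ^ 2) / 2)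

structure GD (H w : ℝ → ℝ) (l : Filter ℝ) : Prop where
  anti : Antitone H
  nonneg : ∀ x, 0 ≤ H x
  le_one : ∀ x, H x ≤ 1
  one : ∀ x ≤ 0, H x = 1
  wpos : ∀ x, 0 < w x
  basis : ∀ P : ℝ → Prop, (∀ᶠ u in l, P u) ↔ ∃ U, 0 < H U ∧ ∀ u, U < u → 0 < H u → P u
  up : ∀ U, 0 < H U → ∃ u, U < u ∧ 0 < H u
  gum : ∀ s : ℝ, Tendsto (fun u => H (u + s / w u) / H u) l (𝓝 (Real.exp (-s)))

namespace GD
variable {H w : ℝ → ℝ} {l : Filter ℝ}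

lemma ev_pos (h : GD H w l) : ∀ᶠ u in l, 0 < H u :=
  (h.basis _).2 ⟨0, by rw [h.one 0 le_rfl]; norm_num, fun _ _ hu => hu⟩

lemma ev_gt (h : GD H w l) {U : ℝ} (hU : 0 < H U) : ∀ᶠ u in l, U < u :=
  (h.basis _).2 ⟨U, hU, fun u hu _ => hu⟩

lemma ex (h : GD H w l) {P : ℝ → Prop} (hP : ∀ᶠ u in l, P u) : ∃ u, P u := by
  obtain ⟨U, hU, hP⟩ := (h.basis _).1 hP
  obtain ⟨u, hu, hu'⟩ := h.up U hU
  exact ⟨u, hP u hu hu'⟩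

lemma Hzero (h : GD H w l) {ε : ℝ} (hε : 0 < ε) : ∃ U, 0 < H U ∧ H U < ε := by
  have h1 : ∀ᶠ u in l, H (u + 1 / w u) / H u < 1 / 2 := by
    refine (h.gum 1).eventually_lt_const ?_
    have := Real.exp_one_gt_d9
    rw [Real.exp_neg, inv_eq_one_div]
    apply one_div_lt_one_div_of_lt <;> linarith
  have h2 : ∀ᶠ u in l, 0 < H (u + 1 / w u) / H u :=
    (h.gum 1).eventually_const_lt (Real.exp_pos _)
  obtain ⟨U, hU, hP⟩ := (h.basis _).1 (h1.and h2)
  have key : ∀ k : ℕ, ∃ u, U < u ∧ 0 < H u ∧ H u ≤ (1 / 2) ^ k := by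
    intro k
    induction k with
    | zero =>
      obtain ⟨u, hu, hu'⟩ := h.up U hU
      exact ⟨u, hu, hu', by simpa using h.le_one u⟩
    | succ k ih =>
      obtain ⟨u, hu, hu', hk⟩ := ih
      obtain ⟨p1, p2⟩ := hP u hu hu'
      have hw := h.wpos u
      have hw' : 0 < 1 / w u := by positivity
      refine ⟨u + 1 / w u, by linarith, ?_, ?_⟩
      · have := mul_pos p2 hu'
        rwa [div_mul_cancel₀ _ hu'.ne'] at this
      · rw [div_lt_iff₀ hu'] at p1
        rw [pow_succ]; linarith
  obtain ⟨k, hk⟩ := exists_pow_lt_of_lt_one hε (show (1 / 2 : ℝ) < 1 by norm_num)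
  obtain ⟨u, _, hu', hk'⟩ := key k
  exact ⟨u, hu', hk'.trans_lt hk⟩

lemma ev_lt (h : GD H w l) {ε : ℝ} (hε : 0 < ε) : ∀ᶠ u in l, H u < ε := by
  obtain ⟨U, hU, hU'⟩ := h.Hzero hε
  filter_upwards [h.ev_gt hU] with u hu 
  exact (h.anti hu.le).trans_lt hU'

lemma uw (h : GD H w l) : Tendsto (fun u => u * w u) l atTop := by
  rw [tendsto_atTop]
  intro K
  have h1 : ∀ᶠ u in l, H (u + (-K) / w u) / H u < Real.exp K + 1 := by
    refine (h.gum (-K)).eventually_lt_const ?_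
    rw [neg_neg]; linarith
  have hp : 0 < Real.exp K + 1 := by positivity
  filter_upwards [h1, h.ev_pos, h.ev_lt (ε := 1 / (Real.exp K + 1)) (by positivity)] with u h1 h2 h3
  by_contra! hc
  have hw := h.wpos u
  have : u + (-K) / w u ≤ 0 := by
    rw [neg_div, ← sub_eq_add_neg, sub_nonpos, le_div_iff₀ hw]; exact hc.le
  rw [h.one _ this, div_lt_iff₀ h2] at h1
  rw [lt_div_iff₀ hp] at h3
  linarith

lemma potter0 (h : GD H w l) : ∃ U, 0 < H U ∧ ∀ k : ℕ, ∀ u, U < u → 0 < H u →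
    H (u + (2 ^ k - 1) / w u) ≤ (1 / 2) ^ k * H u := by
  have e1 := Real.exp_one_gt_d9
  have e2 := Real.exp_one_lt_d9
  have h1 : ∀ᶠ u in l, H (u + 1 / w u) / H u < 1 / 2 := by
    refine (h.gum 1).eventually_lt_const ?_
    rw [Real.exp_neg, inv_eq_one_div]
    apply one_div_lt_one_div_of_lt <;> linarith
  have h1' : ∀ᶠ u in l, H (u + 1 / w u) / H u < 0.4 := by
    refine (h.gum 1).eventually_lt_const ?_
    rw [Real.exp_neg, inv_lt_comm₀ (by positivity) (by norm_num)]
    norm_num; linarith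
  have h2 : ∀ᶠ u in l, 0 < H (u + 1 / w u) / H u :=
    (h.gum 1).eventually_const_lt (Real.exp_pos _)
  have h3 : ∀ᶠ u in l, H (u + (-1) / w u) / H u < 3 := by
    refine (h.gum (-1)).eventually_lt_const ?_
    rw [neg_neg]; linarith
  have h4 : ∀ᶠ u in l, 2 < H (u + (-1) / w u) / H u := by
    refine (h.gum (-1)).eventually_const_lt ?_
    rw [neg_neg]; linarith
  obtain ⟨U, hU, hP⟩ := (h.basis _).1 (h1'.and (h2.and (h3.and h4)))
  refine ⟨U, hU, ?_⟩
  intro k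
  induction k with
  | zero => intro u _ _; simp
  | succ k ih =>
    intro u hu hu'
    obtain ⟨p1, p2, p3, p4⟩ := hP u hu hu'
    have hw := h.wpos u
    have hw' : 0 < 1 / w u := by positivity
    set v := u + 1 / w u with hv
    have hv' : 0 < H v := by
      have := mul_pos p2 hu'
      rwa [div_mul_cancel₀ _ hu'.ne'] at this
    have hUv : U < v := by linarith
    rw [div_lt_iff₀ hu'] at p1
    obtain ⟨_, _, q3, _⟩ := hP v hUv hv'
    have hwv := h.wpos v
    have sn : 1 / w v ≤ 2 / w u := by
      by_contra! hc
      have : H (u + (-1) / w u) ≤ H (v + (-1) / w v) := by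
        apply h.anti
        rw [hv, neg_div, neg_div]
        have : 2 / w u = 1 / w u + 1 / w u := by ring
        linarith
      rw [lt_div_iff₀ hu'] at p4
      rw [div_lt_iff₀ hv'] at q3
      linarith
    have hk1 : (1 : ℝ) ≤ 2 ^ k := one_le_pow₀ (by norm_num)
    calc H (u + (2 ^ (k + 1) - 1) / w u) ≤ H (v + (2 ^ k - 1) / w v) := by
          apply h.anti
          have : (2 ^ k - 1) * (1 / w v) ≤ (2 ^ k - 1) * (2 / w u) :=
            mul_le_mul_of_nonneg_left sn (by linarith)
          have e : u + (2 ^ (k + 1) - 1) / w u = u + 1 / w u + (2 ^ k - 1) * (2 / w u) := by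
            rw [pow_succ]; ring
          rw [e, hv, div_eq_mul_one_div (2 ^ k - 1) (w _)]
          linarith
      _ ≤ (1 / 2) ^ k * H v := ih v hUv hv'
      _ ≤ (1 / 2) ^ (k + 1) * H u := by
          rw [pow_succ, mul_assoc]
          apply mul_le_mul_of_nonneg_left _ (by positivity)
          linarith

lemma potter1 (h : GD H w l) : ∀ᶠ u in l, ∀ x, 0 ≤ x →
    H (u + x / w u) ≤ 2 / (1 + x) * H u := by
  obtain ⟨U, hU, hP⟩ := h.potter0
  filter_upwards [h.ev_gt hU, h.ev_pos] with u hu hu' x hx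
  obtain ⟨k, hk1, hk2⟩ := exists_nat_pow_near (show (1 : ℝ) ≤ 1 + x by linarith)
    (show (1 : ℝ) < 2 by norm_num)
  have hw := h.wpos u
  calc H (u + x / w u) ≤ H (u + (2 ^ k - 1) / w u) := by
        apply h.anti
        gcongr
        linarith
    _ ≤ (1 / 2) ^ k * H u := hP k u hu hu'
    _ ≤ _ := by
        gcongr
        rw [le_div_iff₀ (by linarith), one_div, inv_pow, inv_mul_le_iff₀ (by positivity)]
        rw [pow_succ] at hk2; linarith

lemma potter (h : GD H w l) (s : ℝ) : ∃ K, 0 ≤ K ∧ ∀ᶠ u in l, ∀ x, 0 ≤ x →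
    H (u + (s + x) / w u) / H u ≤ K / (1 + x) := by
  set M := Real.exp (-s) + 1 with hM
  have hMp : 0 < M := by positivity
  refine ⟨2 + M * (1 + |s|), by positivity, ?_⟩
  have h1 : ∀ᶠ u in l, H (u + s / w u) / H u < M :=
    (h.gum s).eventually_lt_const (by linarith)
  filter_upwards [h1, h.potter1, h.ev_pos] with u h1 h2 hu x hx
  have hw := h.wpos u
  have h3 : H (u + (s + x) / w u) / H u ≤ M := by
    refine le_trans ?_ h1.le
    gcongr
    apply h.anti
    gcongr
    linarith
  have h0 : 0 ≤ H (u + (s + x) / w u) / H u := div_nonneg (h.nonneg _) hu.le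
  set r := H (u + (s + x) / w u) / H u with hr
  rw [le_div_iff₀ (by linarith)]
  rcases le_total 0 (s + x) with hsx | hsx
  · have h4 := h2 (s + x) hsx
    rw [← div_le_iff₀ hu, ← hr, le_div_iff₀ (by linarith)] at h4
    have h5 : r * (-s) ≤ M * |s| := by
      calc r * (-s) ≤ r * |s| := mul_le_mul_of_nonneg_left (neg_le_abs s) h0
        _ ≤ M * |s| := mul_le_mul_of_nonneg_right h3 (abs_nonneg s)
    nlinarith
  · have : x ≤ |s| := by linarith [neg_le_abs s]
    nlinarith [abs_nonneg s]

end GD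
noncomputable def kk (H : ℝ → ℝ) (t c : ℝ) : ℝ := if 0 < c then H (t / c) else 0

noncomputable def QQ (H : ℝ → ℝ) (t : ℝ) : ℝ := ∫ θ in (-π)..π, kk H t (Real.cos θ)

lemma cos_lim (t : ℝ) : Tendsto (fun m : ℝ => m * (1 - Real.cos (t / √m))) atTop (𝓝 (t ^ 2 / 2)) := by
  have hlow : Tendsto (fun m : ℝ => t ^ 2 / 2 - t ^ 4 * (5 / 96) * m⁻¹) atTop (𝓝 (t ^ 2 / 2)) := by
    have := (tendsto_const_nhds (x := t ^ 2 / 2)).sub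
      ((tendsto_inv_atTop_zero (𝕜 := ℝ)).const_mul (t ^ 4 * (5 / 96)))
    rwa [mul_zero, sub_zero] at this
  refine tendsto_of_tendsto_of_tendsto_of_le_of_le' hlow tendsto_const_nhds ?_ ?_
  · filter_upwards [eventually_ge_atTop (t ^ 2), eventually_gt_atTop 0] with m hm hm0
    have hr : 0 < √m := Real.sqrt_pos.2 hm0
    have hsq : √m ^ 2 = m := Real.sq_sqrt hm0.le
    have h1 : |t / √m| ≤ 1 := by
      rw [abs_div, abs_of_pos hr, div_le_one hr]
      exact Real.abs_le_sqrt hm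
    have h2 := (abs_le.1 (Real.cos_bound h1)).2
    have e2 : (t / √m) ^ 2 = t ^ 2 / m := by rw [div_pow, hsq]
    have e4 : |t / √m| ^ 4 = t ^ 4 / m ^ 2 := by
      rw [show |t / √m| ^ 4 = (|t / √m| ^ 2) ^ 2 by ring, sq_abs, e2]; ring
    rw [e2, e4] at h2
    have h3 := mul_le_mul_of_nonneg_left h2 hm0.le
    have e5 : m * (Real.cos (t / √m) - (1 - t ^ 2 / m / 2)) = t ^ 2 / 2 - m * (1 - Real.cos (t / √m)) := by
      field_simp; ring
    have e6 : m * (t ^ 4 / m ^ 2 * (5 / 96)) = t ^ 4 * (5 / 96) * m⁻¹ := by field_simp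
    rw [e5, e6] at h3
    linarith
  · filter_upwards [eventually_gt_atTop 0] with m hm0
    have hsq : √m ^ 2 = m := Real.sq_sqrt hm0.le
    have h2 := Real.one_sub_sq_div_two_le_cos (x := t / √m)
    have e2 : (t / √m) ^ 2 = t ^ 2 / m := by rw [div_pow, hsq]
    rw [e2] at h2
    have h3 : m * (1 - Real.cos (t / √m)) ≤ m * (t ^ 2 / m / 2) :=
      mul_le_mul_of_nonneg_left (by linarith) hm0.le
    have e : m * (t ^ 2 / m / 2) = t ^ 2 / 2 := by field_simp
    linarith

lemma kk_meas {H : ℝ → ℝ} (hH : Antitone H) (t : ℝ) : Measurable (kk H t) := by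
  unfold kk
  exact Measurable.ite measurableSet_Ioi (hH.measurable.comp (measurable_const.div measurable_id))
    measurable_const

namespace GD
variable {H w : ℝ → ℝ} {l : Filter ℝ}

lemma gum' (h : GD H w l) {u x : ℕ → ℝ} {x0 : ℝ} (hu : Tendsto u atTop l)
    (hx : Tendsto x atTop (𝓝 x0)) :
    Tendsto (fun n => H (u n + x n / w (u n)) / H (u n)) atTop (𝓝 (Real.exp (-x0))) := by
  have hpos := hu.eventually h.ev_pos
  rw [tendsto_order]
  constructor
  · intro a ha
    have hc : ContinuousAt (fun z => Real.exp (-z)) x0 := by fun_prop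
    obtain ⟨z, hz, hz'⟩ := ((hc.eventually (lt_mem_nhds ha)).filter_mono nhdsWithin_le_nhds |>.and
      (self_mem_nhdsWithin : Ioi x0 ∈ 𝓝[>] x0)).exists
    filter_upwards [((h.gum z).comp hu).eventually_const_lt hz, hx.eventually_lt_const hz', hpos]
      with n h1 h2 h3
    refine lt_of_lt_of_le h1 ?_
    simp only [Function.comp]
    have := h.wpos (u n)
    gcongr
    apply h.anti
    gcongr
  · intro a ha
    have hc : ContinuousAt (fun z => Real.exp (-z)) x0 := by fun_prop
    obtain ⟨z, hz, hz'⟩ := ((hc.eventually (gt_mem_nhds ha)).filter_mono nhdsWithin_le_nhds |>.and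
      (self_mem_nhdsWithin : Iio x0 ∈ 𝓝[<] x0)).exists
    filter_upwards [((h.gum z).comp hu).eventually_lt_const hz, hx.eventually_const_lt hz', hpos]
      with n h1 h2 h3
    refine lt_of_le_of_lt ?_ h1
    simp only [Function.comp]
    have := h.wpos (u n)
    gcongr
    apply h.anti
    gcongr

lemma kk_nonneg (h : GD H w l) (t c : ℝ) : 0 ≤ kk H t c := by
  unfold kk; split_ifs
  · exact h.nonneg _
  · exact le_rfl

lemma kk_le_one (h : GD H w l) (t c : ℝ) : kk H t c ≤ 1 := by
  unfold kk; split_ifs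
  · exact h.le_one _
  · norm_num

lemma QQ_lim (h : GD H w l) {u : ℕ → ℝ} (hu : Tendsto u atTop l) (s : ℝ) :
    Tendsto (fun n => √(u n * w (u n)) / H (u n) * QQ H (u n + s / w (u n))) atTop
      (𝓝 (√(2 * π) * Real.exp (-s))) := by
  have hm : Tendsto (fun n => u n * w (u n)) atTop atTop := h.uw.comp hu
  have hr : Tendsto (fun n => √(u n * w (u n))) atTop atTop := Real.tendsto_sqrt_atTop.comp hm
  set Fn : ℕ → ℝ → ℝ := fun n => (Ioc (-π * √(u n * w (u n))) (π * √(u n * w (u n)))).indicator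
    (fun t => kk H (u n + s / w (u n)) (Real.cos (t / √(u n * w (u n)))) / H (u n)) with hFn
  have hint : ∀ᶠ n in atTop, ∫ t, Fn n t =
      √(u n * w (u n)) / H (u n) * QQ H (u n + s / w (u n)) := by
    filter_upwards [hr.eventually_gt_atTop 0] with n hn
    rw [hFn]
    simp only
    rw [integral_indicator measurableSet_Ioc, ← intervalIntegral.integral_of_le (by
      nlinarith [Real.pi_pos])]
    rw [intervalIntegral.integral_div,
      intervalIntegral.integral_comp_div (fun θ => kk H (u n + s / w (u n)) (Real.cos θ)) hn.ne']
    rw [mul_div_cancel_right₀ _ hn.ne', mul_div_cancel_right₀ _ hn.ne', QQ, smul_eq_mul]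
    ring
  refine Tendsto.congr' hint ?_
  have hlim : ∫ t : ℝ, Real.exp (-(s + t ^ 2 / 2)) = √(2 * π) * Real.exp (-s) := by
    have := integral_gaussian (1 / 2)
    have e : ∀ t : ℝ, Real.exp (-(s + t ^ 2 / 2)) = Real.exp (-s) * Real.exp (-(1 / 2) * t ^ 2) := by
      intro t; rw [← Real.exp_add]; congr 1; ring
    simp_rw [e]
    rw [integral_const_mul, this, mul_comm]
    congr 2; ring
  rw [← hlim]
  obtain ⟨K, hK, hpot⟩ := h.potter s
  obtain ⟨c, hc⟩ : ∃ c : ℝ, c = 1 / π ^ 2 := ⟨_, rfl⟩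
  have hcpos : 0 < c := by rw [hc]; positivity
  refine tendsto_integral_filter_of_dominated_convergence (fun t => K * (1 + (√c * t) ^ 2)⁻¹) ?_ ?_ ?_ ?_
  · filter_upwards with n
    rw [hFn]
    refine AEStronglyMeasurable.indicator ?_ measurableSet_Ioc
    refine Measurable.aestronglyMeasurable ?_
    refine ((kk_meas h.anti _).comp ?_).div_const _
    fun_prop
  · filter_upwards [hu.eventually hpot, hu.eventually h.ev_pos, hm.eventually_gt_atTop 0,
      hm.eventually_ge_atTop (2 * |s|)] with n hp hH hm0 hms
    filter_upwards with t
    have hb : 0 ≤ K * (1 + (√c * t) ^ 2)⁻¹ := by positivity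
    simp only [hFn]
    by_cases ht : t ∈ Ioc (-π * √(u n * w (u n))) (π * √(u n * w (u n)))
    swap
    · rw [indicator_of_notMem ht]; simpa using hb
    rw [indicator_of_mem ht, Real.norm_eq_abs, abs_of_nonneg (div_nonneg (h.kk_nonneg _ _) hH.le)]
    rw [kk]
    split_ifs with hcos
    swap
    · simpa using hb
    have hw := h.wpos (u n)
    set m := u n * w (u n) with hmdef
    have hrp : 0 < √m := Real.sqrt_pos.2 hm0
    have hsq : √m ^ 2 = m := Real.sq_sqrt hm0.le
    have hθ : |t / √m| ≤ π := by
      rw [abs_div, abs_of_pos hrp, div_le_iff₀ hrp, abs_le]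
      exact ⟨by linarith [ht.1], ht.2⟩
    have hq := Real.cos_le_one_sub_mul_cos_sq hθ
    have e2 : (t / √m) ^ 2 = t ^ 2 / m := by rw [div_pow, hsq]
    rw [e2] at hq
    have hcs : (√c * t) ^ 2 = c * t ^ 2 := by rw [mul_pow, Real.sq_sqrt hcpos.le]
    rw [hcs, ← div_eq_mul_inv]
    refine le_trans ?_ (hp (c * t ^ 2) (by positivity))
    gcongr
    apply h.anti
    have hms' : 0 ≤ m + s := by linarith [neg_le_abs s, abs_nonneg s]
    rw [← mul_le_mul_iff_left₀ hw, add_mul, div_mul_cancel₀ _ hw.ne', div_mul_eq_mul_div, add_mul,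
      div_mul_cancel₀ _ hw.ne', ← hmdef, le_div_iff₀ hcos]
    have hx0 : 0 ≤ t ^ 2 / m := by positivity
    -- (m + s + c t^2) cos ≤ m + s
    have hcm : c * t ^ 2 ≤ (m + s) * (2 * c * (t ^ 2 / m)) := by
      have : m ≤ 2 * (m + s) := by linarith [neg_le_abs s, abs_nonneg s]
      calc c * t ^ 2 = m * (c * (t ^ 2 / m)) := by field_simp
        _ ≤ (2 * (m + s)) * (c * (t ^ 2 / m)) := by gcongr
        _ = _ := by ring
    have hq' : Real.cos (t / √m) ≤ 1 - 2 * c * (t ^ 2 / m) := by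
      rw [hc]; convert hq using 2; ring
    set z := 2 * c * (t ^ 2 / m)
    have hz : 0 ≤ z := by positivity
    calc (m + (s + c * t ^ 2)) * Real.cos (t / √m) ≤ ((m + s) * (1 + z)) * Real.cos (t / √m) := by
          gcongr; linarith
      _ ≤ ((m + s) * (1 + z)) * (1 - z) := by gcongr
      _ ≤ m + s := by nlinarith [mul_nonneg hms' (mul_nonneg hz hz)]
  · exact (integrable_inv_one_add_sq.comp_mul_left' (Real.sqrt_pos.2 hcpos).ne').const_mul K
  · filter_upwards with t
    have hdiv : Tendsto (fun n => t / √(u n * w (u n))) atTop (𝓝 0) := hr.const_div_atTop t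
    have hcos : Tendsto (fun n => Real.cos (t / √(u n * w (u n)))) atTop (𝓝 1) := by
      have := (Real.continuous_cos.tendsto 0).comp hdiv
      rwa [Real.cos_zero] at this
    have hx : Tendsto (fun n => (s + u n * w (u n) * (1 - Real.cos (t / √(u n * w (u n))))) /
        Real.cos (t / √(u n * w (u n)))) atTop (𝓝 (s + t ^ 2 / 2)) := by
      have := (((cos_lim t).comp hm).const_add s).div hcos one_ne_zero
      rw [div_one] at this
      exact this
    refine (h.gum' hu hx).congr' ?_
    filter_upwards [hcos.eventually_const_lt zero_lt_one, hr.eventually_gt_atTop |t|] with n hn1 hn2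
    have hw := h.wpos (u n)
    have hp3 := Real.pi_gt_three
    have habs := abs_lt.1 hn2
    have hr0 : 0 < √(u n * w (u n)) := (abs_nonneg t).trans_lt hn2
    simp only [hFn]
    have hmem : t ∈ Ioc (-π * √(u n * w (u n))) (π * √(u n * w (u n))) :=
      ⟨by nlinarith, by nlinarith⟩
    rw [indicator_of_mem hmem, kk, if_pos hn1]
    congr 2
    field_simp
    ring

end GD
namespace GD
variable {H w : ℝ → ℝ} {l : Filter ℝ}

lemma kk_ii (h : GD H w l) (t : ℝ) {g : ℝ → ℝ} (hg : Measurable g) (a b : ℝ) :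
    IntervalIntegrable (fun θ => kk H t (g θ)) volume a b := by
  refine (intervalIntegrable_const (c := (1 : ℝ))).mono_fun
    (((kk_meas h.anti t).comp hg).aestronglyMeasurable) ?_
  filter_upwards with θ
  rw [Real.norm_eq_abs, abs_of_nonneg (h.kk_nonneg _ _)]
  simpa using h.kk_le_one _ _

lemma QQ_lower (h : GD H w l) {x v : ℝ} (hx : 0 < x) (hv : x ≤ v) :
    Real.arccos (x / v) * H v ≤ QQ H x := by
  have hvp : 0 < v := hx.trans_le hv
  have h0 := Real.arccos_nonneg (x / v)
  have h1 := Real.arccos_le_pi (x / v)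
  have hle1 : x / v ≤ 1 := (div_le_one hvp).2 hv
  have hxv : 0 < x / v := by positivity
  have hpi := Real.pi_pos
  calc Real.arccos (x / v) * H v = ∫ _ in (0 : ℝ)..Real.arccos (x / v), H v := by
        simp
    _ ≤ ∫ θ in (0 : ℝ)..Real.arccos (x / v), kk H x (Real.cos θ) := by
        refine intervalIntegral.integral_mono_on h0 (by simp)
          (h.kk_ii x Real.measurable_cos _ _) ?_
        intro θ hθ
        have hc : x / v ≤ Real.cos θ := by
          have := Real.cos_le_cos_of_nonneg_of_le_pi hθ.1 h1 hθ.2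
          rwa [Real.cos_arccos (by linarith) hle1] at this
        have hc0 : 0 < Real.cos θ := by linarith
        rw [kk, if_pos hc0]
        apply h.anti
        rw [div_le_iff₀ hc0]
        rw [div_le_iff₀ hvp] at hc
        linarith
    _ ≤ QQ H x := by
        refine intervalIntegral.integral_mono_interval (by linarith) h0 h1 ?_
          (h.kk_ii x Real.measurable_cos _ _)
        filter_upwards with θ using h.kk_nonneg _ _

lemma QQ_lower2 (h : GD H w l) {x : ℝ} (hx : 0 < x) : π / 4 * H (√2 * x) ≤ QQ H x := by
  have h2 : 1 ≤ √2 := by rw [Real.one_le_sqrt]; norm_num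
  have := h.QQ_lower hx (v := √2 * x) (by nlinarith)
  have e : x / (√2 * x) = Real.cos (π / 4) := by
    rw [Real.cos_pi_div_four]
    have : √2 * √2 = 2 := Real.mul_self_sqrt (by norm_num)
    field_simp
    nlinarith
  rwa [e, Real.arccos_cos (by positivity) (by linarith [Real.pi_pos])] at this

lemma ZZ_bound (h : GD H w l) {t φ : ℝ} (ht : 0 < t) (h0 : 0 ≤ φ) (h1 : φ ≤ π / 4) :
    |(∫ θ in (-π)..π, kk H t (Real.cos φ * |Real.cos θ| + Real.sin φ * Real.sin θ)) - 2 * QQ H t|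
      ≤ 4 * φ * QQ H t := by
  have hpi := Real.pi_pos
  set g : ℝ → ℝ := fun θ => kk H t (Real.cos φ * |Real.cos θ| + Real.sin φ * Real.sin θ) with hg
  set k : ℝ → ℝ := fun θ => kk H t (Real.cos θ) with hk
  have hgi : ∀ a b, IntervalIntegrable g volume a b := fun a b =>
    h.kk_ii t (g := fun θ => Real.cos φ * |Real.cos θ| + Real.sin φ * Real.sin θ)
      (Continuous.measurable (by fun_prop)) a b
  have hki : ∀ a b, IntervalIntegrable k volume a b := fun a b =>
    h.kk_ii t Real.measurable_cos a b
  have hper : Function.Periodic g (2 * π) := by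
    intro θ; simp [hg]
  have e1 : ∫ θ in (-π)..π, g θ = ∫ θ in (-(π / 2))..(3 * π / 2), g θ := by
    have := hper.intervalIntegral_add_eq (-π) (-(π / 2))
    convert this using 2 <;> ring
  have e2 : ∫ θ in (π / 2)..(3 * π / 2), g θ = ∫ θ in (-(π / 2))..(π / 2), g θ := by
    have := intervalIntegral.integral_comp_sub_left (a := -(π / 2)) (b := π / 2) g π
    rw [show π - π / 2 = π / 2 by ring, show π - -(π / 2) = 3 * π / 2 by ring] at this
    rw [← this]
    congr 1
    funext θ
    simp [hg, Real.cos_pi_sub, Real.sin_pi_sub]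
  have e3 : ∫ θ in (-(π / 2))..(π / 2), g θ = ∫ θ in (-(π / 2) - φ)..(π / 2 - φ), k θ := by
    rw [← intervalIntegral.integral_comp_sub_right k φ]
    refine intervalIntegral.integral_congr fun θ hθ => ?_
    rw [uIcc_of_le (by linarith)] at hθ
    have := Real.cos_nonneg_of_neg_pi_div_two_le_of_le hθ.1 hθ.2
    simp only [hg, hk]
    rw [abs_of_nonneg this, Real.cos_sub]
    congr 1; ring
  have z1 : ∫ θ in (-π)..(-(π / 2) - φ), k θ = 0 := by
    rw [intervalIntegral.integral_congr (g := fun _ => (0 : ℝ))]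
    · simp
    · intro θ hθ
      rw [uIcc_of_le (by linarith)] at hθ
      have : Real.cos θ ≤ 0 := by
        rw [← Real.cos_neg]
        exact Real.cos_nonpos_of_pi_div_two_le_of_le (by linarith [hθ.2]) (by linarith [hθ.1])
      simp only [hk, kk]
      rw [if_neg (not_lt.2 this)]
  have z2 : ∫ θ in (π / 2)..π, k θ = 0 := by
    rw [intervalIntegral.integral_congr (g := fun _ => (0 : ℝ))]
    · simp
    · intro θ hθ
      rw [uIcc_of_le (by linarith)] at hθ
      have : Real.cos θ ≤ 0 :=
        Real.cos_nonpos_of_pi_div_two_le_of_le (by linarith [hθ.1]) (by linarith [hθ.2])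
      simp only [hk, kk]
      rw [if_neg (not_lt.2 this)]
  have eQ : QQ H t = ∫ θ in (-π)..π, k θ := rfl
  have s1 := intervalIntegral.integral_add_adjacent_intervals (hgi (-(π / 2)) (π / 2))
    (hgi (π / 2) (3 * π / 2))
  have s2 := intervalIntegral.integral_add_adjacent_intervals (hki (-π) (-(π / 2) - φ))
    (hki (-(π / 2) - φ) (π / 2 - φ))
  have s3 := intervalIntegral.integral_add_adjacent_intervals (hki (-π) (π / 2 - φ))
    (hki (π / 2 - φ) (π / 2))
  have s4 := intervalIntegral.integral_add_adjacent_intervals (hki (-π) (π / 2))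
    (hki (π / 2) π)
  have b0 : 0 ≤ ∫ θ in (π / 2 - φ)..(π / 2), k θ :=
    intervalIntegral.integral_nonneg (by linarith) fun θ _ => h.kk_nonneg _ _
  have b1 : ∫ θ in (π / 2 - φ)..(π / 2), k θ ≤ φ * H (√2 * t) := by
    calc _ ≤ ∫ θ in (π / 2 - φ)..(π / 2), H (√2 * t) := by
          refine intervalIntegral.integral_mono_on (by linarith) (hki _ _) (by simp) ?_
          intro θ hθ
          simp only [hk, kk]
          split_ifs with hc
          · apply h.anti
            rw [le_div_iff₀ hc]
            have : Real.cos θ ≤ Real.cos (π / 4) :=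
              Real.cos_le_cos_of_nonneg_of_le_pi (by linarith) (by linarith [hθ.2])
                (by linarith [hθ.1])
            rw [Real.cos_pi_div_four] at this
            have h2 : √2 * √2 = 2 := Real.mul_self_sqrt (by norm_num)
            calc √2 * t * Real.cos θ ≤ √2 * t * (√2 / 2) := by gcongr
              _ = (√2 * √2) * t / 2 := by ring
              _ = t := by rw [h2]; ring
          · exact h.nonneg _
      _ = φ * H (√2 * t) := by simp
  have b2 := h.QQ_lower2 ht
  have b3 : 2 * (φ * H (√2 * t)) ≤ 4 * φ * QQ H t := by
    have : H (√2 * t) ≤ 2 * QQ H t := by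
      have := Real.pi_gt_three
      nlinarith [h.nonneg (√2 * t)]
    nlinarith
  rw [e1, abs_le]
  constructor <;> linarith

end GD

lemma repr_prob {Ω : Type*} [MeasurableSpace Ω] (μ : Measure Ω) [IsProbabilityMeasure μ]
    (R Θ : Ω → ℝ) (hRm : Measurable R) (hΘm : Measurable Θ)
    (hRpos : ∀ᵐ ω ∂μ, 0 < R ω)
    (hΘunif : μ.map Θ = (ENNReal.ofReal (2 * π))⁻¹ • volume.restrict (Ioo (-π) π))
    (hindep : IndepFun R Θ μ) {g : ℝ → ℝ} (hg : Measurable g) {t : ℝ} (ht : 0 ≤ t) :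
    (μ {ω | t < R ω * g (Θ ω)}).toReal = (2 * π)⁻¹ *
      ∫ θ in (-π)..π, kk (fun x => (μ {ω | x < R ω}).toReal) t (g θ) := by
  have hpi := Real.pi_pos
  have : IsProbabilityMeasure (μ.map R) := Measure.isProbabilityMeasure_map hRm.aemeasurable
  have : IsProbabilityMeasure (μ.map Θ) := Measure.isProbabilityMeasure_map hΘm.aemeasurable
  have hS : MeasurableSet {p : ℝ × ℝ | t < p.1 * g p.2} :=
    measurableSet_lt measurable_const (measurable_fst.mul (hg.comp measurable_snd))
  have e1 : μ {ω | t < R ω * g (Θ ω)} = ((μ.map R).prod (μ.map Θ)) {p : ℝ × ℝ | t < p.1 * g p.2} := by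
    rw [← (indepFun_iff_map_prod_eq_prod_map_map hRm.aemeasurable hΘm.aemeasurable).1 hindep,
      Measure.map_apply (hRm.prodMk hΘm) hS]
    rfl
  rw [e1, Measure.prod_apply_symm hS, ← integral_toReal
    (measurable_measure_prodMk_right hS).aemeasurable
    (by filter_upwards with θ using measure_lt_top _ _)]
  have e2 : ∀ θ, ((μ.map R) ((fun x => (x, θ)) ⁻¹' {p : ℝ × ℝ | t < p.1 * g p.2})).toReal =
      kk (fun x => (μ {ω | x < R ω}).toReal) t (g θ) := by
    intro θ
    rw [Measure.map_apply hRm (measurable_prodMk_right hS), kk]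
    split_ifs with hc
    · congr 2
      ext ω
      simp [div_lt_iff₀ hc]
    · rw [ENNReal.toReal_eq_zero_iff]
      left
      refine measure_mono_null ?_ (ae_iff.1 hRpos)
      intro ω hω
      simp only [mem_preimage, mem_setOf_eq] at hω ⊢
      intro hR
      push Not at hc
      nlinarith
  simp_rw [e2]
  rw [hΘunif, integral_smul_measure, intervalIntegral.integral_of_le (by linarith),
    integral_Ioc_eq_integral_Ioo, ENNReal.toReal_inv, ENNReal.toReal_ofReal (by positivity),
    smul_eq_mul]
lemma GD.of_dist {H F w : ℝ → ℝ} {l : Filter ℝ} (hHF : ∀ x, H x = 1 - F x) (anti : Antitone H)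
    (nonneg : ∀ x, 0 ≤ H x) (le_one : ∀ x, H x ≤ 1) (one : ∀ x ≤ 0, H x = 1) (hw : ∀ x, 0 < w x)
    (hendpoint : (l = atTop ∧ ∀ x, F x < 1) ∨
      (l = nhdsWithin 1 (Iio 1) ∧ (∀ x < 1, F x < 1) ∧ ∀ x, 1 ≤ x → F x = 1))
    (hGumbel : ∀ s : ℝ,
      Tendsto (fun u => (1 - F (u + s / w u)) / (1 - F u)) l (𝓝 (Real.exp (-s)))) :
    GD H w l := by
  refine ⟨anti, nonneg, le_one, one, hw, ?_, ?_, by simpa only [hHF] using hGumbel⟩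
  · intro P
    rcases hendpoint with ⟨rfl, h1⟩ | ⟨rfl, h1, h2⟩
    · have hp : ∀ x, 0 < H x := fun x => by rw [hHF]; linarith [h1 x]
      rw [eventually_atTop]
      constructor
      · rintro ⟨a, ha⟩
        exact ⟨a, hp a, fun u hu _ => ha u hu.le⟩
      · rintro ⟨U, _, hU⟩
        exact ⟨U + 1, fun u hu => hU u (by linarith) (hp u)⟩
    · have hp : ∀ x, 0 < H x ↔ x < 1 := fun x => by
        rw [hHF]
        constructor
        · intro h; by_contra! hc; linarith [h2 x hc]
        · intro h; linarith [h1 x h]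
      have : (∀ᶠ u in 𝓝[<] (1 : ℝ), P u) ↔ ∃ a ∈ Iio (1 : ℝ), Ioo a 1 ⊆ {u | P u} :=
        mem_nhdsLT_iff_exists_Ioo_subset
      rw [this]
      constructor
      · rintro ⟨a, ha, hs⟩
        exact ⟨a, (hp a).2 ha, fun u hu hu' => hs ⟨hu, (hp u).1 hu'⟩⟩
      · rintro ⟨U, hU, hs⟩
        exact ⟨U, (hp U).1 hU, fun u hu => hs u hu.1 ((hp u).2 hu.2)⟩
  · intro U hU
    rcases hendpoint with ⟨rfl, h1⟩ | ⟨rfl, h1, h2⟩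
    · exact ⟨U + 1, by linarith, by rw [hHF]; linarith [h1 (U + 1)]⟩
    · have : U < 1 := by
        by_contra! hc
        rw [hHF] at hU; linarith [h2 U hc]
      obtain ⟨v, hv, hv'⟩ := exists_between this
      exact ⟨v, hv, by rw [hHF]; linarith [h1 v hv']⟩

/-- abstract tail asymptotics along the quantile sequence -/
lemma GD.quantile {H w G : ℝ → ℝ} {l : Filter ℝ} (h : GD H w l) (hGm : Monotone G)
    (hGQ : ∀ x, 0 ≤ x → 1 - G x = (2 * π)⁻¹ * QQ H x) (hGH : ∀ x, 0 ≤ x → 1 - G x ≤ H x)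
    {b : ℕ → ℝ} (hb : ∀ n : ℕ, b n = sInf {x | 1 - 1 / (n : ℝ) < G x}) :
    Tendsto b atTop l ∧ ∀ s, Tendsto (fun n : ℕ => (n : ℝ) * (1 - G (b n + s / w (b n)))) atTop
      (𝓝 (Real.exp (-s))) := by
  have hpi := Real.pi_pos
  have key : ∀ U, 0 < H U → ∀ᶠ n : ℕ in atTop, U < b n ∧ 0 < H (b n) ∧
      BddBelow {x | 1 - 1 / (n : ℝ) < G x} ∧ {x | 1 - 1 / (n : ℝ) < G x}.Nonempty := by
    intro U hU
    have hU' : 0 < H (max U 0) := by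
      rcases max_choice U 0 with e | e <;> rw [e]
      · exact hU
      · rw [h.one 0 le_rfl]; norm_num
    obtain ⟨U1, hU1, hHU1⟩ := h.up _ hU'
    obtain ⟨v, hv, hHv⟩ := h.up _ hHU1
    have hUU1 : U < U1 := (le_max_left _ _).trans_lt hU1
    have h0U1 : 0 < U1 := (le_max_right _ _).trans_lt hU1
    have hq : 0 < 1 - G U1 := by
      rw [hGQ _ h0U1.le]
      have := h.QQ_lower h0U1 hv.le
      have h2 : 0 < Real.arccos (U1 / v) := Real.arccos_pos.2 ((div_lt_one (by linarith)).2 hv)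
      have h3 := mul_pos h2 hHv
      have : 0 < QQ H U1 := by linarith
      positivity
    have hlim : Tendsto (fun n : ℕ => 1 / (n : ℝ)) atTop (𝓝 0) := tendsto_one_div_atTop_nhds_zero_nat
    filter_upwards [hlim.eventually_lt_const hq, eventually_gt_atTop 0] with n hn hn0
    have hlb : ∀ x ∈ {x | 1 - 1 / (n : ℝ) < G x}, U1 ≤ x := by
      intro x (hx : 1 - 1 / (n : ℝ) < G x)
      by_contra! hc
      linarith [hGm hc.le]
    have hbd : BddBelow {x | 1 - 1 / (n : ℝ) < G x} := ⟨U1, hlb⟩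
    have hn' : (0 : ℝ) < 1 / n := by positivity
    obtain ⟨u, hu1, hu2⟩ := h.Hzero (lt_min hn' hHU1)
    have huU : U1 ≤ u := by
      by_contra! hc
      have := h.anti hc.le
      linarith [min_le_right (1 / (n : ℝ)) (H U1)]
    have hmem : u ∈ {x | 1 - 1 / (n : ℝ) < G x} := by
      change 1 - 1 / (n : ℝ) < G u
      have := hGH u (by linarith)
      linarith [min_le_left (1 / (n : ℝ)) (H U1)]
    refine ⟨?_, ?_, hbd, ⟨u, hmem⟩⟩
    · rw [hb n]
      exact hUU1.trans_le (le_csInf ⟨u, hmem⟩ hlb)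
    · have : b n ≤ u := by rw [hb n]; exact csInf_le hbd hmem
      exact hu1.trans_le (h.anti this)
  have hbl : Tendsto b atTop l := by
    intro S hS
    obtain ⟨U, hU, hS'⟩ := (h.basis (fun u => u ∈ S)).1 hS
    rw [mem_map]
    filter_upwards [key U hU] with n hn
    exact hS' _ hn.1 hn.2.1
  refine ⟨hbl, ?_⟩
  have key0 := key 0 (by rw [h.one 0 le_rfl]; norm_num)
  set C := √(2 * π) with hC
  have hCpos : 0 < C := Real.sqrt_pos.2 (by positivity)
  set A : ℕ → ℝ := fun n => √(b n * w (b n)) / H (b n) * (2 * π) / n with hA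
  set r : ℝ → ℕ → ℝ := fun s n => (n : ℝ) * (1 - G (b n + s / w (b n))) with hr
  have hbw : Tendsto (fun n => b n * w (b n)) atTop atTop := h.uw.comp hbl
  have hAr : ∀ s, Tendsto (fun n => A n * r s n) atTop (𝓝 (C * Real.exp (-s))) := by
    intro s
    refine (h.QQ_lim hbl s).congr' ?_
    filter_upwards [hbw.eventually_ge_atTop (-s), eventually_gt_atTop 0] with n h1 h2
    have hw := h.wpos (b n)
    have : 0 ≤ b n + s / w (b n) := by
      have : b n + s / w (b n) = (b n * w (b n) + s) / w (b n) := by field_simp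
      rw [this]
      exact div_nonneg (by linarith) hw.le
    simp only [hA, hr]
    rw [hGQ _ this]
    have : (n : ℝ) ≠ 0 := by positivity
    field_simp
  have hA0 : ∀ n, 0 ≤ A n := fun n => by
    have := h.nonneg (b n)
    simp only [hA]; positivity
  have hr1 : ∀ s, 0 < s → ∀ᶠ n in atTop, r s n ≤ 1 := by
    intro s hs
    filter_upwards [key0, eventually_gt_atTop 0] with n hn hn0
    obtain ⟨_, _, hbd, hne⟩ := hn
    have hw := h.wpos (b n)
    have hn' : (0 : ℝ) < n := by exact_mod_cast hn0
    have : sInf {x | 1 - 1 / (n : ℝ) < G x} < b n + s / w (b n) := by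
      rw [← hb n]
      have : 0 < s / w (b n) := by positivity
      linarith
    obtain ⟨x, hx, hx'⟩ := exists_lt_of_csInf_lt hne this
    have hx2 : 1 - 1 / (n : ℝ) < G x := hx
    have h3 : 1 - G (b n + s / w (b n)) ≤ 1 / n := by linarith [hGm hx'.le]
    calc r s n ≤ n * (1 / n) := mul_le_mul_of_nonneg_left h3 hn'.le
      _ = 1 := by field_simp
  have hr2 : ∀ s, s < 0 → ∀ᶠ n in atTop, 1 ≤ r s n := by
    intro s hs
    filter_upwards [key0, eventually_gt_atTop 0] with n hn hn0
    obtain ⟨_, _, hbd, hne⟩ := hn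
    have hw := h.wpos (b n)
    have hn' : (0 : ℝ) < n := by exact_mod_cast hn0
    have : b n + s / w (b n) < sInf {x | 1 - 1 / (n : ℝ) < G x} := by
      rw [← hb n]
      have : s / w (b n) < 0 := div_neg_of_neg_of_pos hs hw
      linarith
    have h1 : b n + s / w (b n) ∉ {x | 1 - 1 / (n : ℝ) < G x} := notMem_of_lt_csInf this hbd
    have h2 : ¬ (1 - 1 / (n : ℝ) < G (b n + s / w (b n))) := h1
    have h3 : 1 / n ≤ 1 - G (b n + s / w (b n)) := by linarith
    calc 1 = n * (1 / (n : ℝ)) := by field_simp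
      _ ≤ r s n := mul_le_mul_of_nonneg_left h3 hn'.le
  have hcont : ContinuousAt (fun z => C * Real.exp (-z)) 0 := by fun_prop
  have hAlim : Tendsto A atTop (𝓝 C) := by
    rw [tendsto_order]
    constructor
    · intro a ha
      have ha' : a < C * Real.exp (-0) := by simpa using ha
      obtain ⟨z, hz, hz'⟩ := ((hcont.eventually (lt_mem_nhds ha')).filter_mono
        nhdsWithin_le_nhds |>.and (self_mem_nhdsWithin : Ioi (0 : ℝ) ∈ 𝓝[>] 0)).exists
      filter_upwards [(hAr z).eventually_const_lt hz, hr1 z hz'] with n h1 h2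
      nlinarith [hA0 n]
    · intro a ha
      have ha' : C * Real.exp (-0) < a := by simpa using ha
      obtain ⟨z, hz, hz'⟩ := ((hcont.eventually (gt_mem_nhds ha')).filter_mono
        nhdsWithin_le_nhds |>.and (self_mem_nhdsWithin : Iio (0 : ℝ) ∈ 𝓝[<] 0)).exists
      filter_upwards [(hAr z).eventually_lt_const hz, hr2 z hz'] with n h1 h2
      nlinarith [hA0 n]
  intro s
  have := (hAr s).div hAlim hCpos.ne'
  rw [mul_div_cancel_left₀ _ hCpos.ne'] at this
  refine this.congr' ?_
  filter_upwards [hAlim.eventually_const_lt hCpos] with n hn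
  exact mul_div_cancel_left₀ _ hn.ne'

theorem maxima_half_skew_gumbel_marginal
{Ω : Type*} [MeasurableSpace Ω] (μ : Measure Ω) [IsProbabilityMeasure μ]
    (R Θ : Ω → ℝ) (hRm : Measurable R) (hΘm : Measurable Θ)
    (hRpos : ∀ᵐ ω ∂μ, 0 < R ω)
    (hΘunif : μ.map Θ = (ENNReal.ofReal (2 * π))⁻¹ • volume.restrict (Ioo (-π) π))
    (hindep : IndepFun R Θ μ)
    (X Y : Ω → ℝ)
    (hX : X = fun ω => R ω * Real.cos (Θ ω))
    (hY : Y = fun ω => R ω * Real.sin (Θ ω))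
    (F G : ℝ → ℝ)
    (hF : F = fun x => (μ {ω | R ω ≤ x}).toReal)
    (hG : G = fun x => (μ {ω | X ω ≤ x}).toReal)
    (w : ℝ → ℝ) (hw : ∀ x, 0 < w x)
    (l : Filter ℝ)
    (hendpoint : (l = atTop ∧ ∀ x, F x < 1) ∨
      (l = nhdsWithin 1 (Iio 1) ∧ (∀ x < 1, F x < 1) ∧ ∀ x, 1 ≤ x → F x = 1))
    (hGumbel : ∀ s : ℝ,
      Tendsto (fun u => (1 - F (u + s / w u)) / (1 - F u)) l (𝓝 (Real.exp (-s))))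
    (b a : ℕ → ℝ)
    (hb : ∀ n : ℕ, b n = sInf {x | 1 - 1 / (n : ℝ) < G x})
    (ha : ∀ n : ℕ, a n = 1 / w (b n))
    (ρ : ℕ → ℝ) (hρ : ∀ n, ρ n ∈ Ioc (0 : ℝ) 1)
    (lam : ℝ) (hlam : 0 ≤ lam)
    (hHR : Tendsto (fun n : ℕ => (1 - ρ n) * b n / a n) atTop (𝓝 (2 * lam ^ 2))) :
    ∀ y : ℝ,
      Tendsto (fun n : ℕ =>
          (n : ℝ) * (μ {ω | a n * y + b n <
            ρ n * |X ω| + Real.sqrt (1 - ρ n ^ 2) * Y ω}).toReal)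
        atTop (𝓝 (2 * Real.exp (-y))) ∧
      Tendsto (fun n : ℕ =>
          ((μ {ω | ρ n * |X ω| + Real.sqrt (1 - ρ n ^ 2) * Y ω ≤
            a n * (y + Real.log 2) + b n}).toReal) ^ n)
        atTop (𝓝 (Real.exp (-Real.exp (-y)))) := by
  have hpi := Real.pi_pos
  set H : ℝ → ℝ := fun x => (μ {ω | x < R ω}).toReal with hH
  have compl : ∀ (Z : Ω → ℝ), Measurable Z → ∀ x,
      (μ {ω | Z ω ≤ x}).toReal = 1 - (μ {ω | x < Z ω}).toReal := by
    intro Z hZ x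
    have hm : MeasurableSet {ω | x < Z ω} := measurableSet_lt measurable_const hZ
    have := probReal_compl_eq_one_sub (μ := μ) hm
    have e : {ω | Z ω ≤ x} = {ω | x < Z ω}ᶜ := by ext ω; simp
    rw [e]; exact this
  have hXm : Measurable X := by
    rw [hX]; exact hRm.mul (Real.measurable_cos.comp hΘm)
  have hYm : Measurable Y := by
    rw [hY]; exact hRm.mul (Real.measurable_sin.comp hΘm)
  have hHF : ∀ x, H x = 1 - F x := by
    intro x; rw [hF]; simp only [compl R hRm x, hH]; ring
  have hGG : ∀ x, 1 - G x = (μ {ω | x < X ω}).toReal := by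
    intro x; rw [hG]; simp only [compl X hXm x]; ring
  have hGD : GD H w l := by
    refine GD.of_dist hHF ?_ (fun x => ENNReal.toReal_nonneg) ?_ ?_ hw hendpoint hGumbel
    · intro x y hxy
      exact ENNReal.toReal_mono (measure_ne_top _ _)
        (measure_mono fun ω (hω : y < R ω) => lt_of_le_of_lt hxy hω)
    · intro x
      exact measureReal_le_one
    · intro x hx
      have : μ {ω | x < R ω} = 1 := by
        rw [← mem_ae_iff_prob_eq_one (measurableSet_lt measurable_const hRm)]
        filter_upwards [hRpos] with ω hω
        exact lt_of_le_of_lt hx hω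
      simp [hH, this]
  have hGm : Monotone G := by
    rw [hG]
    intro x y hxy
    exact ENNReal.toReal_mono (measure_ne_top _ _)
        (measure_mono fun ω (hω : X ω ≤ x) => le_trans hω hxy)
  have hGQ : ∀ x, 0 ≤ x → 1 - G x = (2 * π)⁻¹ * QQ H x := by
    intro x hx
    rw [hGG, hX]
    exact repr_prob μ R Θ hRm hΘm hRpos hΘunif hindep Real.measurable_cos hx
  have hGH : ∀ x, 0 ≤ x → 1 - G x ≤ H x := by
    intro x _
    rw [hGG]
    refine ENNReal.toReal_mono (measure_ne_top _ _) (measure_mono_ae ?_)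
    filter_upwards [hRpos] with ω hω
    intro (h1 : x < X ω)
    change x < R ω
    rw [hX] at h1
    have := Real.cos_le_one (Θ ω)
    simp only at h1
    nlinarith
  obtain ⟨hbl, hq⟩ := hGD.quantile hGm hGQ hGH hb
  have hbw : Tendsto (fun n => b n * w (b n)) atTop atTop := hGD.uw.comp hbl
  have hρ1 : Tendsto ρ atTop (𝓝 1) := by
    have h1 := hHR.div_atTop hbw
    have h2 : Tendsto (fun n => 1 - ρ n) atTop (𝓝 0) := by
      refine h1.congr' ?_
      filter_upwards [hbw.eventually_gt_atTop 0] with n hn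
      rw [ha n, div_div_eq_mul_div, div_one, mul_assoc, mul_div_cancel_right₀ _ hn.ne']
    simpa using h2.const_sub 1
  have hφ : Tendsto (fun n => Real.arccos (ρ n)) atTop (𝓝 0) := by
    have := (Real.continuous_arccos.tendsto 1).comp hρ1
    rwa [Real.arccos_one] at this
  have hZm : ∀ n, Measurable (fun ω => ρ n * |X ω| + Real.sqrt (1 - ρ n ^ 2) * Y ω) := by
    intro n
    exact (hXm.abs.const_mul _).add (hYm.const_mul _)
  have main : ∀ y : ℝ, Tendsto (fun n : ℕ =>
          (n : ℝ) * (μ {ω | a n * y + b n <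
            ρ n * |X ω| + Real.sqrt (1 - ρ n ^ 2) * Y ω}).toReal)
        atTop (𝓝 (2 * Real.exp (-y))) := by
    intro y
    have hq' := hq y
    have hE : Tendsto (fun n : ℕ => 4 * Real.arccos (ρ n) * (n * (1 - G (b n + y / w (b n))))) atTop
        (𝓝 0) := by
      simpa using (hφ.const_mul 4).mul hq'
    have hdiff : Tendsto (fun n : ℕ => (n : ℝ) * (μ {ω | a n * y + b n <
            ρ n * |X ω| + Real.sqrt (1 - ρ n ^ 2) * Y ω}).toReal -
            2 * (n * (1 - G (b n + y / w (b n))))) atTop (𝓝 0) := by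
      refine squeeze_zero_norm' ?_ hE
      filter_upwards [hbw.eventually_gt_atTop (-y),
        hφ.eventually_le_const (show 0 < π / 4 by positivity)] with n h1 h2
      have hwn := hw (b n)
      have et : a n * y + b n = b n + y / w (b n) := by rw [ha n]; ring
      rw [et]
      have ht : 0 < b n + y / w (b n) := by
        have : b n + y / w (b n) = (b n * w (b n) + y) / w (b n) := by field_simp
        rw [this]
        exact div_pos (by linarith) hwn
      set t := b n + y / w (b n) with htdef
      have hρn := hρ n
      have hcos : Real.cos (Real.arccos (ρ n)) = ρ n :=
        Real.cos_arccos (by linarith [hρn.1]) hρn.2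
      have hrep := repr_prob μ R Θ hRm hΘm hRpos hΘunif hindep (g := fun θ =>
        Real.cos (Real.arccos (ρ n)) * |Real.cos θ| + Real.sin (Real.arccos (ρ n)) * Real.sin θ)
        (Continuous.measurable (by fun_prop)) ht.le
      have hset : μ {ω | t < ρ n * |X ω| + Real.sqrt (1 - ρ n ^ 2) * Y ω} =
          μ {ω | t < R ω * (Real.cos (Real.arccos (ρ n)) * |Real.cos (Θ ω)| +
            Real.sin (Real.arccos (ρ n)) * Real.sin (Θ ω))} := by
        refine measure_congr ?_
        filter_upwards [hRpos] with ω hω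
        have : ρ n * |X ω| + Real.sqrt (1 - ρ n ^ 2) * Y ω =
            R ω * (Real.cos (Real.arccos (ρ n)) * |Real.cos (Θ ω)| +
            Real.sin (Real.arccos (ρ n)) * Real.sin (Θ ω)) := by
          rw [hX, hY, hcos, Real.sin_arccos]
          simp only
          rw [abs_mul, abs_of_pos hω]
          ring
        change (t < _) = (t < _)
        rw [this]
      rw [hset, hrep, hGQ t ht.le]
      have hZ := hGD.ZZ_bound ht (Real.arccos_nonneg (ρ n)) h2
      rw [Real.norm_eq_abs]
      have hn0 : (0 : ℝ) ≤ n * (2 * π)⁻¹ := by positivity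
      calc _ = |((n : ℝ) * (2 * π)⁻¹) * ((∫ θ in (-π)..π, kk H t
              (Real.cos (Real.arccos (ρ n)) * |Real.cos θ| +
              Real.sin (Real.arccos (ρ n)) * Real.sin θ)) - 2 * QQ H t)| := by
            congr 1; ring
        _ = ((n : ℝ) * (2 * π)⁻¹) * |(∫ θ in (-π)..π, kk H t
              (Real.cos (Real.arccos (ρ n)) * |Real.cos θ| +
              Real.sin (Real.arccos (ρ n)) * Real.sin θ)) - 2 * QQ H t| := by
            rw [abs_mul, abs_of_nonneg hn0]
        _ ≤ ((n : ℝ) * (2 * π)⁻¹) * (4 * Real.arccos (ρ n) * QQ H t) :=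
            mul_le_mul_of_nonneg_left hZ hn0
        _ = _ := by ring
    have := hdiff.add (hq'.const_mul 2)
    simpa using this
  intro y
  refine ⟨main y, ?_⟩
  have h1 := (main (y + Real.log 2)).neg
  have e : 2 * Real.exp (-(y + Real.log 2)) = Real.exp (-y) := by
    rw [neg_add, Real.exp_add, Real.exp_neg (Real.log 2), Real.exp_log two_pos]
    ring
  rw [e] at h1
  refine (Real.tendsto_one_add_pow_exp_of_tendsto (g := fun n => -(μ {ω | a n * (y + Real.log 2) + b n <
            ρ n * |X ω| + Real.sqrt (1 - ρ n ^ 2) * Y ω}).toReal) (t := -Real.exp (-y)) ?_).congr ?_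
  · refine h1.congr fun n => ?_
    ring
  · intro n
    rw [compl _ (hZm n)]
    ring
end

section
/- For all x, y ∈ ℝ, lim_{n→∞} [P(X ≤ a_n·x + b_n, ρ_n|X| + √(1-ρ_n²)·Y ≤ a_n·y + b_n + a_n·ln 2)]^n = H_λ(x, y + ln 2)·Λ(y + ln 2), where Λ(t) = exp(-e^{-t}) and H_λ(x,y) = exp(-Φ(λ + (x-y)/(2λ))·e^{-y} - Φ(λ + (y-x)/(2λ))·e^{-x}) with Φ the standard normal distribution function. -/
open MeasureTheory Filter Real Set ProbabilityTheory Topology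

structure GumbelTail (Q f : ℝ → ℝ) (l : Filter ℝ) : Prop where
  anti : Antitone Q
  nonneg : ∀ u, 0 ≤ Q u
  fpos : ∀ u, 0 < f u
  one : ∀ u, u ≤ 0 → Q u = 1
  ev : ∀ P : ℝ → Prop, (∀ᶠ u in l, P u) ↔ ∃ U, 0 < Q U ∧ ∀ u, U ≤ u → 0 < Q u → P u
  lim : ∀ s : ℝ, Tendsto (fun u => Q (u + s * f u) / Q u) l (𝓝 (Real.exp (-s)))

namespace GumbelTail

variable {Q f : ℝ → ℝ} {l : Filter ℝ}

lemma ev_pos (h : GumbelTail Q f l) : ∀ᶠ u in l, 0 < Q u :=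
  (h.ev _).2 ⟨0, by rw [h.one 0 le_rfl]; norm_num, fun _ _ hu => hu⟩

lemma ev_ge (h : GumbelTail Q f l) {U : ℝ} (hU : 0 < Q U) : ∀ᶠ u in l, U ≤ u :=
  (h.ev _).2 ⟨U, hU, fun _ hu _ => hu⟩

lemma tendsto_of (h : GumbelTail Q f l) {ι : Type*} {k : Filter ι} {g : ι → ℝ}
    (h1 : ∀ U, 0 < Q U → ∀ᶠ i in k, U ≤ g i) (h2 : ∀ᶠ i in k, 0 < Q (g i)) :
    Tendsto g k l := by
  intro s hs
  obtain ⟨U, hU, hP⟩ := (h.ev (fun u => u ∈ s)).1 hs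
  rw [mem_map]
  filter_upwards [h1 U hU, h2] with i h1 h2
  exact hP _ h1 h2

lemma ev_pos_add (h : GumbelTail Q f l) (s : ℝ) : ∀ᶠ u in l, 0 < Q (u + s * f u) := by
  filter_upwards [(h.lim s).eventually (lt_mem_nhds (Real.exp_pos (-s))), h.ev_pos] with u h1 h2
  have := (div_pos_iff_of_pos_right h2).1 h1
  exact this

lemma tendsto_add (h : GumbelTail Q f l) : Tendsto (fun u => u + 1 * f u) l l := by
  apply h.tendsto_of
  · intro U hU
    filter_upwards [h.ev_ge hU] with u hu
    have := h.fpos u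
    linarith
  · exact h.ev_pos_add 1

lemma ev_two (h : GumbelTail Q f l) : ∀ᶠ u in l, f (u + 1 * f u) ≤ 2 * f u := by
  have h1 := ((h.lim 1).comp h.tendsto_add).mul (h.lim 1)
  have h2 := h.lim 3
  have h3 : Real.exp (-3) < Real.exp (-1) * Real.exp (-1) := by
    rw [← Real.exp_add]; apply Real.exp_lt_exp.2; norm_num
  filter_upwards [h2.eventually_lt h1 h3, h.ev_pos, h.ev_pos_add 1] with u hu h4 h5
  simp only [Function.comp] at hu
  rw [div_mul_div_cancel₀ h5.ne', div_lt_div_iff_of_pos_right h4] at hu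
  by_contra hc
  push Not at hc
  have := h.anti (show u + 3 * f u ≤ u + 1 * f u + 1 * f (u + 1 * f u) by linarith)
  linarith

lemma ev_half (h : GumbelTail Q f l) : ∀ᶠ u in l, Q (u + 1 * f u) ≤ Q u / 2 := by
  have h3 : Real.exp (-1) < 1 / 2 := by
    have := Real.exp_one_gt_d9
    rw [Real.exp_neg, ← one_div]
    apply one_div_lt_one_div_of_lt <;> linarith
  filter_upwards [(h.lim 1).eventually_lt_const h3, h.ev_pos] with u hu h4
  rw [div_lt_iff₀ h4] at hu
  linarith

lemma exists_step (h : GumbelTail Q f l) : ∃ U, 0 < Q U ∧ ∀ u, U ≤ u → 0 < Q u →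
    (f (u + 1 * f u) ≤ 2 * f u ∧ Q (u + 1 * f u) ≤ Q u / 2 ∧ 0 < Q (u + 1 * f u)) :=
  (h.ev _).1 (h.ev_two.and (h.ev_half.and (h.ev_pos_add 1)))

lemma potter (h : GumbelTail Q f l) : ∀ᶠ u in l, ∀ v, 0 ≤ v →
    Q (u + v * f u) ≤ 2 / (1 + v) * Q u := by
  obtain ⟨U, hU, hP⟩ := h.exists_step
  have key : ∀ k : ℕ, ∀ u, U ≤ u → 0 < Q u → Q (u + (2 ^ k - 1) * f u) ≤ Q u / 2 ^ k := by
    intro k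
    induction k with
    | zero => intro u _ _; simp
    | succ k ih =>
      intro u hu hq
      obtain ⟨h1, h2, h3⟩ := hP u hu hq
      have hf := h.fpos u
      have := ih (u + 1 * f u) (by linarith) h3
      have hk : (1 : ℝ) ≤ 2 ^ k := one_le_pow₀ (by norm_num)
      have h5 : u + 1 * f u + (2 ^ k - 1) * f (u + 1 * f u) ≤ u + (2 ^ (k + 1) - 1) * f u := by
        have := mul_le_mul_of_nonneg_left h1 (sub_nonneg.2 hk)
        rw [pow_succ]; nlinarith
      calc _ ≤ _ := h.anti h5
        _ ≤ _ := this
        _ ≤ (Q u / 2) / 2 ^ k := by gcongr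
        _ = _ := by rw [pow_succ]; field_simp
  refine (h.ev _).2 ⟨U, hU, fun u hu hq v hv => ?_⟩
  obtain ⟨k, hk1, hk2⟩ := exists_nat_pow_near (show (1 : ℝ) ≤ 1 + v by linarith)
    (show (1 : ℝ) < 2 by norm_num)
  have hf := h.fpos u
  calc Q (u + v * f u) ≤ Q (u + (2 ^ k - 1) * f u) := by
        apply h.anti; gcongr; linarith
    _ ≤ Q u / 2 ^ k := key k u hu hq
    _ = 1 / 2 ^ k * Q u := by ring
    _ ≤ _ := by
        refine mul_le_mul_of_nonneg_right ?_ hq.le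
        rw [div_le_div_iff₀ (by positivity) (by positivity)]
        rw [pow_succ] at hk2; linarith

lemma potter' (h : GumbelTail Q f l) {K : ℝ} (hK : 0 ≤ K) : ∃ C, 0 < C ∧ ∀ᶠ u in l, ∀ v, -K ≤ v →
    Q (u + v * f u) ≤ C / (1 + K + v) * Q u := by
  refine ⟨(1 + K) * (2 * Real.exp K), by positivity, ?_⟩
  have he : 1 ≤ Real.exp K := Real.one_le_exp hK
  have := (h.lim (-K)).eventually_lt_const (show Real.exp (-(-K)) < 2 * Real.exp K by
    rw [neg_neg]; linarith)
  filter_upwards [this, h.potter, h.ev_pos] with u h1 h2 h3 v hv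
  rw [div_lt_iff₀ h3] at h1
  have hf := h.fpos u
  rcases le_or_gt 0 v with h0 | h0
  · refine (h2 v h0).trans ?_
    gcongr ?_ * _
    rw [div_le_div_iff₀ (by positivity) (by positivity)]
    nlinarith [mul_nonneg hK h0, mul_nonneg (mul_nonneg hK h0) (sub_nonneg.2 he), mul_nonneg hK (sub_nonneg.2 he), mul_nonneg h0 (sub_nonneg.2 he)]
  · have : Q (u + v * f u) ≤ Q (u + -K * f u) := by apply h.anti; gcongr
    refine this.trans (h1.le.trans ?_)
    rcases hv.eq_or_lt with rfl | hv
    · gcongr ?_ * _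
      rw [le_div_iff₀ (by linarith)]
      nlinarith
    gcongr ?_ * _
    rw [le_div_iff₀ (by linarith)]
    rw [mul_comm]
    exact mul_le_mul_of_nonneg_right (by linarith) (by positivity)

lemma tendsto_zero (h : GumbelTail Q f l) : Tendsto Q l (𝓝 0) := by
  obtain ⟨U, hU, hP⟩ := h.exists_step
  have key : ∀ k : ℕ, ∃ u, U ≤ u ∧ 0 < Q u ∧ Q u ≤ Q U / 2 ^ k := by
    intro k
    induction k with
    | zero => exact ⟨U, le_rfl, hU, by simp⟩
    | succ k ih =>
      obtain ⟨u, h1, h2, h3⟩ := ih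
      obtain ⟨h4, h5, h6⟩ := hP u h1 h2
      refine ⟨_, ?_, h6, h5.trans ?_⟩
      · have := h.fpos u; linarith
      · rw [pow_succ, ← div_div]; gcongr
  have hz : Tendsto (fun k : ℕ => Q U / 2 ^ k) atTop (𝓝 0) := by
    have := (tendsto_pow_atTop_nhds_zero_of_lt_one (r := (1/2 : ℝ)) (by norm_num) (by norm_num)).const_mul (Q U)
    simpa [div_eq_mul_inv] using this
  rw [Metric.tendsto_nhds]
  intro ε hε
  obtain ⟨k, hk⟩ := (hz.eventually_lt_const hε).exists
  obtain ⟨u, h1, h2, h3⟩ := key k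
  filter_upwards [h.ev_ge h2] with u' hu'
  rw [Real.dist_eq, sub_zero, abs_of_nonneg (h.nonneg _)]
  have := h.anti hu'
  linarith

lemma ev_small (h : GumbelTail Q f l) (s : ℝ) : ∀ᶠ u in l, s * f u < u := by
  have h1 := (h.lim (-s)).eventually_lt_const (show Real.exp (-(-s)) < Real.exp s + 1 by
    rw [neg_neg]; linarith)
  have h2 := h.tendsto_zero.eventually_lt_const (show 0 < 1 / (Real.exp s + 1) by positivity)
  filter_upwards [h1, h2, h.ev_pos] with u h1 h2 h3
  by_contra hc
  push Not at hc
  rw [h.one _ (by linarith), div_lt_iff₀ h3] at h1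
  rw [lt_div_iff₀ (by positivity)] at h2
  linarith

lemma ev_upos (h : GumbelTail Q f l) : ∀ᶠ u in l, 0 < u := by
  filter_upwards [h.ev_small 0] with u hu
  simpa using hu

lemma tendsto_ratio (h : GumbelTail Q f l) : Tendsto (fun u => f u / u) l (𝓝 0) := by
  rw [Metric.tendsto_nhds]
  intro ε hε
  filter_upwards [h.ev_small (1 / ε), h.ev_upos] with u h1 h2
  have := h.fpos u
  rw [Real.dist_eq, sub_zero, abs_of_nonneg (by positivity), div_lt_iff₀ h2]
  rw [one_div, inv_mul_lt_iff₀ hε] at h1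
  exact h1

lemma lim_loc (h : GumbelTail Q f l) {ι : Type*} {k : Filter ι} {b : ι → ℝ} (hb : Tendsto b k l)
    {v : ι → ℝ} {z : ℝ} (hv : Tendsto v k (𝓝 z)) :
    Tendsto (fun i => Q (b i + v i * f (b i)) / Q (b i)) k (𝓝 (Real.exp (-z))) := by
  have hl := fun s => (h.lim s).comp hb
  have hc : Continuous (fun s : ℝ => Real.exp (-s)) := by fun_prop
  rw [tendsto_order]
  constructor
  · intro c hcc
    have : ∀ᶠ s in 𝓝[>] z, c < Real.exp (-s) :=
      (hc.tendsto z).mono_left nhdsWithin_le_nhds |>.eventually_const_lt hcc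
    obtain ⟨s, hs1, hs2⟩ := (this.and self_mem_nhdsWithin).exists
    filter_upwards [(hl s).eventually_const_lt hs1, hv.eventually_lt_const hs2,
      hb.eventually h.ev_pos] with i h1 h2 h3
    refine lt_of_lt_of_le h1 ?_
    simp only [Function.comp]
    have := h.fpos (b i)
    gcongr
    apply h.anti; gcongr
  · intro c hcc
    have : ∀ᶠ s in 𝓝[<] z, Real.exp (-s) < c :=
      (hc.tendsto z).mono_left nhdsWithin_le_nhds |>.eventually_lt_const hcc
    obtain ⟨s, hs1, hs2⟩ := (this.and self_mem_nhdsWithin).exists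
    filter_upwards [(hl s).eventually_lt_const hs1, hv.eventually_const_lt hs2,
      hb.eventually h.ev_pos] with i h1 h2 h3
    refine lt_of_le_of_lt ?_ h1
    simp only [Function.comp]
    have := h.fpos (b i)
    gcongr
    apply h.anti; gcongr

end GumbelTail

noncomputable def gk (Q : ℝ → ℝ) (t A : ℝ) : ℝ := if 0 < A then Q (t / A) else 0

noncomputable def dl (f : ℝ → ℝ) (u : ℝ) : ℝ := √(f u / u)

lemma one_sub_cos_sinc (x : ℝ) : 1 - Real.cos x = x ^ 2 / 2 * Real.sinc (x / 2) ^ 2 := by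
  have h1 : Real.cos x = 1 - 2 * Real.sin (x / 2) ^ 2 := by
    have := Real.cos_two_mul (x / 2)
    rw [show 2 * (x / 2) = x by ring] at this
    rw [this]; nlinarith [Real.sin_sq_add_cos_sq (x / 2)]
  rcases eq_or_ne x 0 with rfl | hx
  · simp
  · rw [h1, Real.sinc_of_ne_zero (by positivity)]
    field_simp
    ring

namespace GumbelTail

variable {Q f : ℝ → ℝ} {l : Filter ℝ}

lemma gk_nonneg (h : GumbelTail Q f l) (t A : ℝ) : 0 ≤ gk Q t A := by
  unfold gk; split_ifs
  · exact h.nonneg _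
  · exact le_rfl

lemma gk_mono (h : GumbelTail Q f l) {t : ℝ} (ht : 0 ≤ t) : Monotone (gk Q t) := by
  intro A B hAB
  by_cases hA : 0 < A
  · have hB : 0 < B := hA.trans_le hAB
    simp only [gk, hA, hB, if_true]
    apply h.anti
    gcongr
  · simp only [gk, hA, if_false]
    exact h.gk_nonneg t B

lemma gk_meas (h : GumbelTail Q f l) {t : ℝ} (ht : 0 ≤ t) : Measurable (gk Q t) :=
  (h.gk_mono ht).measurable

lemma dl_pos (h : GumbelTail Q f l) : ∀ᶠ u in l, 0 < dl f u := by
  filter_upwards [h.ev_upos] with u hu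
  have := h.fpos u
  unfold dl; positivity

lemma dl_zero (h : GumbelTail Q f l) : Tendsto (dl f) l (𝓝 0) := by
  have := h.tendsto_ratio.sqrt
  rw [Real.sqrt_zero] at this
  exact this

lemma dl_sq (h : GumbelTail Q f l) {u : ℝ} (hu : 0 < u) : dl f u ^ 2 = f u / u := by
  have := h.fpos u
  unfold dl; rw [Real.sq_sqrt (by positivity)]

lemma gk_lim (h : GumbelTail Q f l) {ι : Type*} {k : Filter ι} {b : ι → ℝ} (hb : Tendsto b k l)
    {p : ι → ℝ} {p0 : ℝ} (hp : Tendsto p k (𝓝 p0)) (z s : ℝ) :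
    Tendsto (fun i => gk Q (b i + f (b i) * z) (Real.cos ((s - p i) * dl f (b i))) / Q (b i)) k
      (𝓝 (Real.exp (-(z + (s - p0) ^ 2 / 2)))) := by
  have hφ : Tendsto (fun i => (s - p i) * dl f (b i)) k (𝓝 0) := by
    simpa using (hp.const_sub s).mul (h.dl_zero.comp hb)
  have hc : Tendsto (fun i => Real.cos ((s - p i) * dl f (b i))) k (𝓝 1) := by
    have := (Real.continuous_cos.tendsto 0).comp hφ
    rw [Real.cos_zero] at this
    exact this
  have hs : Tendsto (fun i => Real.sinc (((s - p i) * dl f (b i)) / 2)) k (𝓝 1) := by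
    have h0 : Tendsto (fun i => ((s - p i) * dl f (b i)) / 2) k (𝓝 0) := by
      simpa using hφ.div_const 2
    have := (Real.continuous_sinc.tendsto 0).comp h0
    rw [Real.sinc_zero] at this
    exact this
  have hv : Tendsto (fun i => (z + (s - p i) ^ 2 / 2 *
      Real.sinc (((s - p i) * dl f (b i)) / 2) ^ 2) / Real.cos ((s - p i) * dl f (b i))) k
      (𝓝 (z + (s - p0) ^ 2 / 2)) := by
    have := (((((hp.const_sub s).pow 2).div_const 2).mul (hs.pow 2)).const_add z).div hc one_ne_zero
    rw [one_pow, mul_one, div_one] at this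
    exact this
  refine (h.lim_loc hb hv).congr' ?_
  filter_upwards [hb.eventually h.ev_upos, hc.eventually_const_lt zero_lt_one] with i h1 h2
  have hf := h.fpos (b i)
  simp only [gk, h2, if_true]
  congr 2
  have e := one_sub_cos_sinc ((s - p i) * dl f (b i))
  rw [mul_pow, h.dl_sq h1] at e
  have e2 : (s - p i) ^ 2 / 2 * Real.sinc (((s - p i) * dl f (b i)) / 2) ^ 2
      = b i / f (b i) * (1 - Real.cos ((s - p i) * dl f (b i))) := by
    rw [e]; field_simp
  rw [e2]
  field_simp
  ring

lemma gk_bound (h : GumbelTail Q f l) (M z : ℝ) : ∃ C, 0 < C ∧ ∀ᶠ u in l, ∀ q s : ℝ, |q| ≤ M →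
    |(s - q) * dl f u| ≤ π → gk Q (u + f u * z) (Real.cos ((s - q) * dl f u)) ≤
      C / (1 + s ^ 2 / (2 * π ^ 2)) * Q u := by
  have hpi := Real.pi_pos
  obtain ⟨C, hC, hev⟩ := h.potter' (K := |z| + M ^ 2 / π ^ 2) (by positivity)
  refine ⟨C, hC, ?_⟩
  filter_upwards [hev, h.ev_upos, h.ev_small (2 * |z|)] with u h1 h2 h3 q s hq hφ
  have hf := h.fpos u
  have hQ := h.nonneg u
  unfold gk
  split_ifs with hc
  swap
  · positivity
  have h4 := h1 (-(|z| + M ^ 2 / π ^ 2) + s ^ 2 / (2 * π ^ 2)) (by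
    have : 0 ≤ s ^ 2 / (2 * π ^ 2) := by positivity
    linarith)
  rw [show 1 + (|z| + M ^ 2 / π ^ 2) + (-(|z| + M ^ 2 / π ^ 2) + s ^ 2 / (2 * π ^ 2))
    = 1 + s ^ 2 / (2 * π ^ 2) by ring] at h4
  refine le_trans (h.anti ?_) h4
  have hcos := Real.cos_le_one_sub_mul_cos_sq hφ
  set c := Real.cos ((s - q) * dl f u)
  set W := 2 / π ^ 2 * ((s - q) * dl f u) ^ 2 with hW
  have hW0 : 0 ≤ W := by positivity
  have hzf : -(|z| * f u) ≤ f u * z := by nlinarith [neg_abs_le z]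
  have ht : u / 2 ≤ u + f u * z := by nlinarith
  have h5 : (u + f u * z) * (1 + W) ≤ (u + f u * z) / c := by
    rw [le_div_iff₀ hc, mul_assoc]
    have : (1 + W) * c ≤ 1 := by nlinarith [mul_le_mul_of_nonneg_left hcos (by positivity : 0 ≤ 1 + W)]
    nlinarith
  refine le_trans ?_ h5
  have h6 : u * W = 2 * (f u * ((s - q) ^ 2 / π ^ 2)) := by
    rw [hW, mul_pow, h.dl_sq h2]; field_simp
  have h7 : (-(|z| + M ^ 2 / π ^ 2) + s ^ 2 / (2 * π ^ 2)) ≤ z + (s - q) ^ 2 / π ^ 2 := by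
    have hqM : q ^ 2 ≤ M ^ 2 := by
      rw [← sq_abs]; gcongr
    have : s ^ 2 / (2 * π ^ 2) ≤ (s - q) ^ 2 / π ^ 2 + M ^ 2 / π ^ 2 := by
      rw [← add_div, div_le_div_iff₀ (by positivity) (by positivity)]
      have : s ^ 2 ≤ ((s - q) ^ 2 + M ^ 2) * 2 := by nlinarith [sq_nonneg (s - 2 * q)]
      have := mul_le_mul_of_nonneg_right this (sq_nonneg π)
      linarith
    linarith [neg_abs_le z]
  have h8 := mul_le_mul_of_nonneg_left h7 hf.le
  have h9 := mul_le_mul_of_nonneg_right ht hW0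
  nlinarith

lemma scaled_dct (h : GumbelTail Q f l) {ι : Type*} {k : Filter ι} [k.IsCountablyGenerated]
    {b : ι → ℝ} (hb : Tendsto b k l) (H : ι → ℝ → ℝ) {c C : ℝ} (hc : 0 < c)
    (hm : ∀ᶠ i in k, Measurable (H i)) (h0 : ∀ i x, 0 ≤ H i x)
    (hbd : ∀ᶠ i in k, ∀ s, |s * dl f (b i)| ≤ c →
      H i (s * dl f (b i)) ≤ C / (1 + s ^ 2 / (2 * π ^ 2)) * Q (b i))
    (h' : ℝ → ℝ)
    (hl : ∀ s, Tendsto (fun i => H i (s * dl f (b i)) / Q (b i)) k (𝓝 (h' s))) (hC : 0 ≤ C) :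
    Tendsto (fun i => (∫ x in (-c)..c, H i x) / (dl f (b i) * Q (b i))) k (𝓝 (∫ s, h' s)) := by
  have hpi := Real.pi_pos
  have key : Tendsto (fun i => ∫ s, (Ioc (-c) c).indicator (H i) (s * dl f (b i)) / Q (b i)) k
      (𝓝 (∫ s, h' s)) := by
    apply tendsto_integral_filter_of_dominated_convergence
      (fun s => C / (1 + s ^ 2 / (2 * π ^ 2)))
    · filter_upwards [hm] with i hi
      have := hi.indicator (measurableSet_Ioc (a := -c) (b := c))
      exact ((this.comp (measurable_id.mul_const _)).div_const _).aestronglyMeasurable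
    · filter_upwards [hbd, hb.eventually h.ev_pos] with i hi hq
      refine ae_of_all _ fun s => ?_
      rw [Real.norm_eq_abs, abs_of_nonneg (div_nonneg (indicator_nonneg (fun _ _ => h0 _ _) _) hq.le),
        div_le_iff₀ hq]
      by_cases hs : s * dl f (b i) ∈ Ioc (-c) c
      · rw [indicator_of_mem hs]
        exact hi s (abs_le.2 ⟨hs.1.le, hs.2⟩)
      · rw [indicator_of_notMem hs]; positivity
    · have := (integrable_inv_one_add_sq.comp_mul_left' (R := (√2 * π)⁻¹) (by positivity)).const_mul C
      refine this.congr (ae_of_all _ fun s => ?_)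
      simp only
      rw [mul_pow, inv_pow, mul_pow, Real.sq_sqrt (by norm_num), div_eq_mul_inv]
      congr 3
      field_simp
    · refine ae_of_all _ fun s => ?_
      refine (hl s).congr' ?_
      have : Tendsto (fun i => s * dl f (b i)) k (𝓝 0) := by
        simpa using (h.dl_zero.comp hb).const_mul s
      filter_upwards [this.eventually (Ioo_mem_nhds (show -c < 0 by linarith) hc)] with i hi
      rw [indicator_of_mem (Ioo_subset_Ioc_self hi)]
  refine key.congr' ?_
  filter_upwards [hb.eventually h.dl_pos] with i hi
  rw [integral_div, Measure.integral_comp_mul_right, integral_indicator measurableSet_Ioc,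
    ← intervalIntegral.integral_of_le (by linarith), abs_of_pos (inv_pos.2 hi), smul_eq_mul]
  field_simp

lemma tail_lim (h : GumbelTail Q f l) {ι : Type*} {k : Filter ι} [k.IsCountablyGenerated]
    {b : ι → ℝ} (hb : Tendsto b k l) (z : ℝ) :
    Tendsto (fun i => (∫ x in (-π)..π, gk Q (b i + f (b i) * z) (Real.cos x)) /
      (dl f (b i) * Q (b i))) k (𝓝 (∫ s : ℝ, Real.exp (-(z + s ^ 2 / 2)))) := by
  obtain ⟨C, hC, hbd⟩ := h.gk_bound 0 z
  refine h.scaled_dct hb (fun i x => gk Q (b i + f (b i) * z) (Real.cos x)) Real.pi_pos (C := C)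
    ?_ (fun _ _ => h.gk_nonneg _ _) ?_ _ ?_ hC.le
  · filter_upwards [hb.eventually (h.ev_small (-z))] with i hi
    exact (h.gk_meas (by linarith)).comp Real.measurable_cos
  · filter_upwards [hb.eventually hbd] with i hi s hs
    simpa using hi 0 s (by simp) (by simpa using hs)
  · intro s
    simpa using h.gk_lim hb (p := fun _ => 0) tendsto_const_nhds z s

lemma joint_lim (h : GumbelTail Q f l) {ι : Type*} {k : Filter ι} [k.IsCountablyGenerated]
    {b : ι → ℝ} (hb : Tendsto b k l) (x y : ℝ) {ψ : ι → ℝ} {p0 : ℝ}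
    (hψ : ∀ i, ψ i ∈ Icc 0 (π / 2)) (hp : Tendsto (fun i => ψ i / dl f (b i)) k (𝓝 p0)) :
    Tendsto (fun i => (∫ φ in (-(π / 2))..(π / 2),
      (max (gk Q (b i + f (b i) * x) (Real.cos φ)) (gk Q (b i + f (b i) * y) (Real.cos (φ - ψ i)))
        + gk Q (b i + f (b i) * y) (Real.cos (φ - ψ i)))) /
      (dl f (b i) * Q (b i))) k (𝓝 (∫ s : ℝ, (max (Real.exp (-(x + s ^ 2 / 2)))
        (Real.exp (-(y + (s - p0) ^ 2 / 2))) + Real.exp (-(y + (s - p0) ^ 2 / 2))))) := by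
  have hpi := Real.pi_pos
  obtain ⟨C, hC, hbd⟩ := h.gk_bound 0 x
  obtain ⟨C', hC', hbd'⟩ := h.gk_bound (|p0| + 1) y
  have hpM : ∀ᶠ i in k, |ψ i / dl f (b i)| < |p0| + 1 :=
    hp.abs.eventually_lt_const (by linarith)
  refine h.scaled_dct hb (fun i φ =>
    (max (gk Q (b i + f (b i) * x) (Real.cos φ)) (gk Q (b i + f (b i) * y) (Real.cos (φ - ψ i)))
        + gk Q (b i + f (b i) * y) (Real.cos (φ - ψ i)))) (c := π / 2) (by positivity)
    (C := C + C' + C')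
    ?_ ?_ ?_ _ ?_ (by positivity)
  · filter_upwards [hb.eventually (h.ev_small (-x)), hb.eventually (h.ev_small (-y))] with i hi hi'
    have h1 := (h.gk_meas (t := b i + f (b i) * x) (by linarith)).comp Real.measurable_cos
    have h2 := (h.gk_meas (t := b i + f (b i) * y) (by linarith)).comp
      (Real.measurable_cos.comp (measurable_id.sub_const (ψ i)))
    exact (h1.max h2).add h2
  · intro i φ
    have h1 := h.gk_nonneg (b i + f (b i) * x) (Real.cos φ)
    have h2 := h.gk_nonneg (b i + f (b i) * y) (Real.cos (φ - ψ i))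
    exact add_nonneg (le_max_of_le_left h1) h2
  · filter_upwards [hb.eventually hbd, hb.eventually hbd', hpM, hb.eventually h.dl_pos]
      with i h1 h2 h3 h4 s hs
    have e : (s - ψ i / dl f (b i)) * dl f (b i) = s * dl f (b i) - ψ i := by field_simp
    have h5 := h1 0 s (by simp) (by simp only [sub_zero]; linarith)
    have h6 := h2 _ s h3.le (by
      rw [e, abs_le]
      have := abs_le.1 hs
      have := hψ i
      exact ⟨by linarith [this.2], by linarith [this.1]⟩)
    rw [e] at h6
    rw [sub_zero] at h5
    have h7 := h.gk_nonneg (b i + f (b i) * x) (Real.cos (s * dl f (b i)))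
    have h8 := h.gk_nonneg (b i + f (b i) * y) (Real.cos (s * dl f (b i) - ψ i))
    rw [add_div, add_div, add_mul, add_mul]
    refine add_le_add (max_le ?_ ?_) h6 <;> linarith
  · intro s
    have h1 := h.gk_lim hb (p := fun _ => 0) tendsto_const_nhds x s
    have h2 := h.gk_lim hb hp y s
    simp only [sub_zero] at h1
    refine ((h1.max h2).add h2).congr' ?_
    filter_upwards [hb.eventually h.ev_pos, hb.eventually h.dl_pos] with i h3 h4
    have e : (s - ψ i / dl f (b i)) * dl f (b i) = s * dl f (b i) - ψ i := by field_simp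
    rw [e, add_div, max_div_div_right h3.le]

end GumbelTail

lemma gauss_int_aux (p : ℝ) : Integrable (fun s : ℝ => Real.exp (-((s - p) ^ 2 / 2))) := by
  have := (integrable_exp_neg_mul_sq (b := 1 / 2) (by norm_num)).comp_sub_right p
  refine this.congr (ae_of_all _ fun s => ?_)
  simp only
  congr 1; ring

lemma gauss_total (z p : ℝ) : ∫ s : ℝ, Real.exp (-(z + (s - p) ^ 2 / 2)) =
    √(2 * π) * Real.exp (-z) := by
  have h1 := integral_gaussian (1 / 2)
  rw [← integral_sub_right_eq_self _ p] at h1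
  simp_rw [neg_add, Real.exp_add]
  rw [integral_const_mul, mul_comm]
  congr 1
  rw [show 2 * π = π / (1 / 2) by ring, ← h1]
  congr 1; ext s; congr 1; ring

lemma Phi_eq (z t : ℝ) : ∫ s in Iic t, Real.exp (-(z + s ^ 2 / 2)) =
    √(2 * π) * (stdNormalCDF t * Real.exp (-z)) := by
  have : √(2 * π) ≠ 0 := by have := Real.pi_pos; positivity
  unfold stdNormalCDF
  simp_rw [neg_add, Real.exp_add]
  rw [integral_const_mul]
  field_simp

lemma Phi_eq' (z p t : ℝ) : ∫ s in Ioi t, Real.exp (-(z + (s - p) ^ 2 / 2)) =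
    √(2 * π) * (stdNormalCDF (p - t) * Real.exp (-z)) := by
  rw [← Phi_eq, ← integral_indicator measurableSet_Ioi, integral_Iic_eq_integral_Iio,
    ← integral_indicator measurableSet_Iio, ← integral_sub_left_eq_self _ volume p]
  congr 1; ext s
  simp only [indicator, mem_Ioi, mem_Iio]
  have : t < p - s ↔ s < p - t := by constructor <;> intro h <;> linarith
  simp only [this]
  congr 3; ring

lemma gauss_max (x y lam : ℝ) (hlam : 0 < lam) :
    ∫ s : ℝ, (max (Real.exp (-(x + s ^ 2 / 2)))
        (Real.exp (-(y + (s - 2 * lam) ^ 2 / 2))) + Real.exp (-(y + (s - 2 * lam) ^ 2 / 2))) =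
    √(2 * π) * ((stdNormalCDF (lam + (x - y) / (2 * lam)) * Real.exp (-y) +
      stdNormalCDF (lam + (y - x) / (2 * lam)) * Real.exp (-x)) + Real.exp (-y)) := by
  have i2 : Integrable (fun s : ℝ => Real.exp (-(y + (s - 2 * lam) ^ 2 / 2))) := by
    simp_rw [neg_add, Real.exp_add]
    exact (gauss_int_aux _).const_mul _
  have i1 : Integrable (fun s : ℝ => Real.exp (-(x + s ^ 2 / 2))) := by
    simp_rw [neg_add, Real.exp_add]
    simpa using (gauss_int_aux 0).const_mul (Real.exp (-x))
  have im : Integrable (fun s : ℝ => max (Real.exp (-(x + s ^ 2 / 2)))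
        (Real.exp (-(y + (s - 2 * lam) ^ 2 / 2)))) := i1.sup i2
  rw [integral_add im i2, gauss_total]
  set t := lam + (y - x) / (2 * lam) with ht
  have ht2 : t * (2 * lam) = 2 * lam ^ 2 + (y - x) := by rw [ht]; field_simp
  have hcmp : ∀ s : ℝ, (y + (s - 2 * lam) ^ 2 / 2) - (x + s ^ 2 / 2) = (2 * lam) * (t - s) := by
    intro s; linarith
  rw [← intervalIntegral.integral_Iic_add_Ioi (b := t) im.integrableOn im.integrableOn]
  have e1 : ∫ s in Iic t, max (Real.exp (-(x + s ^ 2 / 2)))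
        (Real.exp (-(y + (s - 2 * lam) ^ 2 / 2))) = ∫ s in Iic t, Real.exp (-(x + s ^ 2 / 2)) := by
    apply setIntegral_congr_fun measurableSet_Iic
    intro s hs
    apply max_eq_left
    apply Real.exp_le_exp.2
    have := hcmp s
    have := mul_nonneg (by positivity : 0 ≤ 2 * lam) (sub_nonneg.2 hs)
    linarith
  have e2 : ∫ s in Ioi t, max (Real.exp (-(x + s ^ 2 / 2)))
        (Real.exp (-(y + (s - 2 * lam) ^ 2 / 2))) =
        ∫ s in Ioi t, Real.exp (-(y + (s - 2 * lam) ^ 2 / 2)) := by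
    apply setIntegral_congr_fun measurableSet_Ioi
    intro s hs
    apply max_eq_right
    apply Real.exp_le_exp.2
    have := hcmp s
    have := mul_nonneg (by positivity : 0 ≤ 2 * lam) (sub_nonneg.2 (le_of_lt hs))
    linarith
  rw [e1, e2, Phi_eq, Phi_eq', show 2 * lam - t = lam + (x - y) / (2 * lam) by rw [ht]; ring]
  ring

section prob
variable {Ω : Type*} [MeasurableSpace Ω] {μ : Measure Ω} [IsProbabilityMeasure μ] {R Θ : Ω → ℝ}

lemma joint_prob (hRm : Measurable R) (hΘm : Measurable Θ)
    (hΘunif : μ.map Θ = (ENNReal.ofReal (2 * π))⁻¹ • volume.restrict (Ioo (-π) π))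
    (hindep : IndepFun R Θ μ) {S : Set (ℝ × ℝ)} (hS : MeasurableSet S) :
    μ.real {ω | (R ω, Θ ω) ∈ S} = (2 * π)⁻¹ * ∫ θ in (-π)..π, μ.real {ω | (R ω, θ) ∈ S} := by
  have hpi := Real.pi_pos
  have e := hindep.map_prod_eq_prod_map_map hRm.aemeasurable hΘm.aemeasurable
  have h1 : μ {ω | (R ω, Θ ω) ∈ S} = ((μ.map R).prod (μ.map Θ)) S := by
    rw [← e, Measure.map_apply (hRm.prodMk hΘm) hS]; rfl
  have hsl : ∀ θ, (μ.map R) ((fun x => (x, θ)) ⁻¹' S) = μ {ω | (R ω, θ) ∈ S} := by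
    intro θ
    rw [Measure.map_apply hRm (measurable_prodMk_right hS)]; rfl
  have := Measure.isProbabilityMeasure_map (μ := μ) hRm.aemeasurable
  have hmeas : Measurable (fun θ => μ {ω | (R ω, θ) ∈ S}) := by
    simp_rw [← hsl]
    exact measurable_measure_prodMk_right hS
  rw [measureReal_def, h1, hΘunif, Measure.prod_apply_symm hS, lintegral_smul_measure]
  simp_rw [hsl]
  rw [smul_eq_mul, ENNReal.toReal_mul, ENNReal.toReal_inv, ENNReal.toReal_ofReal (by positivity),
    intervalIntegral.integral_of_le (by linarith), integral_Ioc_eq_integral_Ioo]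
  congr 1
  rw [← integral_toReal hmeas.aemeasurable (ae_of_all _ fun _ => measure_lt_top _ _)]
  rfl

lemma gk_eq (hRpos : ∀ᵐ ω ∂μ, 0 < R ω) {t : ℝ} (ht : 0 < t) (A : ℝ) :
    μ.real {ω | t < R ω * A} = gk (fun u => μ.real {ω | u < R ω}) t A := by
  unfold gk
  split_ifs with hA
  · congr 1; ext ω; simp only [mem_ofPred_eq]; rw [div_lt_iff₀ hA]
  · rw [measureReal_eq_zero_iff]
    rw [← nonpos_iff_eq_zero, ← ae_iff.1 hRpos]
    apply measure_mono
    intro ω hω hR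
    simp only [mem_ofPred_eq] at hω
    nlinarith [mul_nonneg hR.le (sub_nonneg.2 (not_lt.1 hA))]

lemma gk_eq_max (hRpos : ∀ᵐ ω ∂μ, 0 < R ω) {t t' : ℝ} (ht : 0 < t) (ht' : 0 < t') (A B : ℝ) :
    μ.real {ω | t < R ω * A ∨ t' < R ω * B} =
      max (gk (fun u => μ.real {ω | u < R ω}) t A) (gk (fun u => μ.real {ω | u < R ω}) t' B) := by
  rw [← gk_eq hRpos ht, ← gk_eq hRpos ht']
  have hor : (∀ᵐ ω ∂μ, t < R ω * A → t' < R ω * B) ∨ (∀ᵐ ω ∂μ, t' < R ω * B → t < R ω * A) := by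
    rcases le_total (t * B) (t' * A) with h | h
    · right
      filter_upwards [hRpos] with ω hω h1
      by_contra h2
      push Not at h2
      have a1 := mul_lt_mul_of_pos_left h1 ht
      have a2 := mul_le_mul_of_nonneg_left h2 ht'.le
      have a3 := mul_le_mul_of_nonneg_left h hω.le
      nlinarith
    · left
      filter_upwards [hRpos] with ω hω h1
      by_contra h2
      push Not at h2
      have a1 := mul_lt_mul_of_pos_left h1 ht'
      have a2 := mul_le_mul_of_nonneg_left h2 ht.le
      have a3 := mul_le_mul_of_nonneg_left h hω.le
      nlinarith
  rcases hor with h | h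
  · have h1 : μ.real {ω | t < R ω * A} ≤ μ.real {ω | t' < R ω * B} :=
      ENNReal.toReal_mono (measure_ne_top _ _) (measure_mono_ae h)
    rw [max_eq_right h1]
    apply measureReal_congr
    filter_upwards [h] with ω h
    apply propext
    exact ⟨fun h' => h'.elim h id, Or.inr⟩
  · have h1 : μ.real {ω | t' < R ω * B} ≤ μ.real {ω | t < R ω * A} :=
      ENNReal.toReal_mono (measure_ne_top _ _) (measure_mono_ae h)
    rw [max_eq_left h1]
    apply measureReal_congr
    filter_upwards [h] with ω h
    apply propext
    exact ⟨fun h' => h'.elim id h, Or.inl⟩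

lemma tail_prob (hRm : Measurable R) (hΘm : Measurable Θ) (hRpos : ∀ᵐ ω ∂μ, 0 < R ω)
    (hΘunif : μ.map Θ = (ENNReal.ofReal (2 * π))⁻¹ • volume.restrict (Ioo (-π) π))
    (hindep : IndepFun R Θ μ) {t : ℝ} (ht : 0 < t) :
    μ.real {ω | t < R ω * Real.cos (Θ ω)} =
      (2 * π)⁻¹ * ∫ θ in (-π)..π, gk (fun u => μ.real {ω | u < R ω}) t (Real.cos θ) := by
  have := joint_prob hRm hΘm hΘunif hindep (S := {p | t < p.1 * Real.cos p.2})
    (measurableSet_lt measurable_const (by fun_prop))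
  simp only [mem_ofPred_eq] at this
  rw [this]
  simp_rw [gk_eq hRpos ht]

lemma union_prob (hRm : Measurable R) (hΘm : Measurable Θ) (hRpos : ∀ᵐ ω ∂μ, 0 < R ω)
    (hΘunif : μ.map Θ = (ENNReal.ofReal (2 * π))⁻¹ • volume.restrict (Ioo (-π) π))
    (hindep : IndepFun R Θ μ) {t t' r : ℝ} (ht : 0 < t) (ht' : 0 < t') (hr : r ∈ Ioc (0 : ℝ) 1)
    {Q : ℝ → ℝ} (hQ : Q = fun u => μ.real {ω | u < R ω})
    (hm1 : Measurable (gk Q t)) (hm2 : Measurable (gk Q t')) :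
    μ.real {ω | t < R ω * Real.cos (Θ ω) ∨
      t' < r * |R ω * Real.cos (Θ ω)| + √(1 - r ^ 2) * (R ω * Real.sin (Θ ω))} =
      (2 * π)⁻¹ * ∫ φ in (-(π / 2))..(π / 2),
        (max (gk Q t (Real.cos φ)) (gk Q t' (Real.cos (φ - Real.arccos r)))
          + gk Q t' (Real.cos (φ - Real.arccos r))) := by
  have hpi := Real.pi_pos
  have hj := joint_prob hRm hΘm hΘunif hindep (S := {p | t < p.1 * Real.cos p.2 ∨
      t' < r * |p.1 * Real.cos p.2| + √(1 - r ^ 2) * (p.1 * Real.sin p.2)})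
    (by
      rw [ofPred_or]
      exact (measurableSet_lt measurable_const (by fun_prop)).union
        (measurableSet_lt measurable_const (by fun_prop)))
  simp only [mem_ofPred_eq] at hj
  rw [hj]
  congr 1
  set J : ℝ → ℝ := fun θ => max (gk Q t (Real.cos θ))
    (gk Q t' (r * |Real.cos θ| + √(1 - r ^ 2) * Real.sin θ)) with hJ
  have e1 : ∀ θ, μ.real {ω | t < R ω * Real.cos θ ∨
      t' < r * |R ω * Real.cos θ| + √(1 - r ^ 2) * (R ω * Real.sin θ)} = J θ := by
    intro θ
    rw [hJ, hQ]
    simp only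
    rw [← gk_eq_max hRpos ht ht']
    apply measureReal_congr
    filter_upwards [hRpos] with ω hω
    apply propext
    change (t < R ω * Real.cos θ ∨
      t' < r * |R ω * Real.cos θ| + √(1 - r ^ 2) * (R ω * Real.sin θ)) ↔
      (t < R ω * Real.cos θ ∨ t' < R ω * (r * |Real.cos θ| + √(1 - r ^ 2) * Real.sin θ))
    rw [abs_mul, abs_of_pos hω]
    rw [show r * (R ω * |Real.cos θ|) + √(1 - r ^ 2) * (R ω * Real.sin θ)
      = R ω * (r * |Real.cos θ| + √(1 - r ^ 2) * Real.sin θ) by ring]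
  simp_rw [e1]
  have hper : Function.Periodic J (2 * π) := by
    intro θ; simp [hJ]
  have hJm : Measurable J := by
    apply (hm1.comp Real.measurable_cos).max (hm2.comp _)
    fun_prop
  have hgb : ∀ s A, 0 ≤ gk Q s A ∧ gk Q s A ≤ 1 := by
    intro s A
    unfold gk
    split_ifs
    · rw [hQ]; exact ⟨measureReal_nonneg, measureReal_le_one⟩
    · norm_num
  have hii : ∀ (K : ℝ → ℝ) (hK : Measurable K) (hb : ∀ x, 0 ≤ K x ∧ K x ≤ 1) (c d : ℝ),
      IntervalIntegrable K volume c d := by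
    intro K hK hb c d
    refine (intervalIntegrable_const (c := (1 : ℝ))).mono_fun hK.aestronglyMeasurable
      (ae_of_all _ fun x => ?_)
    simp only [Real.norm_eq_abs]
    rw [abs_of_nonneg (hb x).1]
    simpa using (hb x).2
  have hJi := hii J hJm (fun x => ⟨le_max_of_le_left (hgb _ _).1, max_le (hgb _ _).2 (hgb _ _).2⟩)
  have p1 := hper.intervalIntegral_add_eq (-π) (-(π / 2))
  rw [show -π + 2 * π = π by ring] at p1
  rw [p1, ← intervalIntegral.integral_add_adjacent_intervals (hJi _ (π / 2)) (hJi _ _)]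
  have p2 : ∫ θ in (π / 2)..(-(π / 2) + 2 * π), J θ = ∫ φ in (-(π / 2))..(π / 2), J (π - φ) := by
    rw [intervalIntegral.integral_comp_sub_left]
    congr 1 <;> ring
  have hcd : ∀ φ, Real.cos (φ - Real.arccos r) = r * Real.cos φ + √(1 - r ^ 2) * Real.sin φ := by
    intro φ
    rw [Real.cos_sub, Real.cos_arccos (by linarith [hr.1]) hr.2, Real.sin_arccos]
    ring
  have hgm2 : Measurable (fun φ => gk Q t' (Real.cos (φ - Real.arccos r))) :=
    hm2.comp (by fun_prop)
  have hgm1 : Measurable (fun φ => gk Q t (Real.cos φ)) := hm1.comp (by fun_prop)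
  rw [p2, intervalIntegral.integral_add
    (hii _ (hgm1.max hgm2) (fun x => ⟨le_max_of_le_left (hgb _ _).1, max_le (hgb _ _).2 (hgb _ _).2⟩) _ _)
    (hii _ hgm2 (fun x => hgb _ _) _ _)]
  have hsub : uIcc (-(π / 2)) (π / 2) = Icc (-(π / 2)) (π / 2) := uIcc_of_le (by linarith)
  congr 1
  · apply intervalIntegral.integral_congr
    intro φ hφ
    rw [hsub] at hφ
    have := Real.cos_nonneg_of_mem_Icc hφ
    simp only [hJ]
    rw [hcd, abs_of_nonneg this]
  · apply intervalIntegral.integral_congr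
    intro φ hφ
    rw [hsub] at hφ
    have hc := Real.cos_nonneg_of_mem_Icc hφ
    simp only [hJ]
    rw [hcd, Real.cos_pi_sub, Real.sin_pi_sub, abs_neg, abs_of_nonneg hc]
    apply max_eq_right
    have : gk Q t (-Real.cos φ) = 0 := by
      unfold gk; rw [if_neg]; linarith
    rw [this]; exact (hgb _ _).1

end prob

section prob2
variable {Ω : Type*} [MeasurableSpace Ω] {μ : Measure Ω} [IsProbabilityMeasure μ] {R Θ : Ω → ℝ}

lemma mk_tail (hRm : Measurable R) (hRpos : ∀ᵐ ω ∂μ, 0 < R ω)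
    {F w : ℝ → ℝ} (hF : F = fun x => (μ {ω | R ω ≤ x}).toReal) (hw : ∀ x, 0 < w x)
    {l : Filter ℝ}
    (hendpoint : (l = atTop ∧ ∀ x, F x < 1) ∨
      (l = nhdsWithin 1 (Iio 1) ∧ (∀ x < 1, F x < 1) ∧ ∀ x, 1 ≤ x → F x = 1))
    (hGumbel : ∀ s : ℝ,
      Tendsto (fun u => (1 - F (u + s / w u)) / (1 - F u)) l (𝓝 (Real.exp (-s)))) :
    GumbelTail (fun u => μ.real {ω | u < R ω}) (fun u => 1 / w u) l := by
  have hQF : ∀ u, μ.real {ω | u < R ω} = 1 - F u := by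
    intro u
    have : {ω | u < R ω} = {ω | R ω ≤ u}ᶜ := by ext ω; simp
    rw [this, probReal_compl_eq_one_sub (measurableSet_le hRm measurable_const), hF]
    rfl
  refine ⟨?_, ?_, ?_, ?_, ?_, ?_⟩
  · intro u v huv
    exact measureReal_mono (fun ω hω => lt_of_le_of_lt huv hω)
  · intro u; exact measureReal_nonneg
  · intro u; have := hw u; positivity
  · intro u hu
    have : ∀ᵐ ω ∂μ, ω ∈ {ω | u < R ω} := by
      filter_upwards [hRpos] with ω hω
      exact lt_of_le_of_lt hu hω
    rw [measureReal_def, (mem_ae_iff_prob_eq_one (measurableSet_lt measurable_const hRm)).1 this]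
    rfl
  · intro P
    simp only [hQF, sub_pos]
    rcases hendpoint with ⟨rfl, h1⟩ | ⟨rfl, h1, h2⟩
    · simp only [h1, eventually_atTop, true_and, forall_true_left]
    · have hlt : ∀ u, F u < 1 ↔ u < 1 := fun u =>
        ⟨fun h => by by_contra hc; rw [h2 u (not_lt.1 hc)] at h; exact lt_irrefl _ h, h1 u⟩
      simp only [hlt]
      have := mem_nhdsLT_iff_exists_Ico_subset (a := (1 : ℝ)) (s := {u | P u})
      constructor
      · intro h
        obtain ⟨U, hU, hs⟩ := this.1 h
        exact ⟨U, hU, fun u h3 h4 => hs ⟨h3, h4⟩⟩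
      · rintro ⟨U, hU, hs⟩
        exact this.2 ⟨U, hU, fun u hu => hs u hu.1 hu.2⟩
  · intro s
    simp only [hQF, mul_one_div]
    exact hGumbel s

lemma ex_quantile {X : Ω → ℝ} (x : ℕ → ℝ) (hx : Monotone x)
    (hae : ∀ᵐ ω ∂μ, ∃ k, X ω ≤ x k) {c : ℝ} (hc : c < 1) :
    ∃ k, c < (μ {ω | X ω ≤ x k}).toReal := by
  have hmono : Monotone (fun k => {ω | X ω ≤ x k}) := by
    intro i j hij ω hω
    exact le_trans hω (hx hij)
  have h1 := tendsto_measure_iUnion_atTop (μ := μ) hmono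
  have h2 : μ (⋃ k, {ω | X ω ≤ x k}) = 1 := by
    rw [← measure_univ (μ := μ)]
    apply measure_congr
    filter_upwards [hae] with ω hω
    apply propext
    change ω ∈ (⋃ k, {ω | X ω ≤ x k}) ↔ ω ∈ univ
    simpa using hω
  rw [h2] at h1
  have h3 := (ENNReal.tendsto_toReal ENNReal.one_ne_top).comp h1
  exact (h3.eventually_const_lt (by simpa using hc)).exists

lemma ex_q (hRm : Measurable R) (hΘm : Measurable Θ) (hRpos : ∀ᵐ ω ∂μ, 0 < R ω)
    (hΘunif : μ.map Θ = (ENNReal.ofReal (2 * π))⁻¹ • volume.restrict (Ioo (-π) π))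
    {F : ℝ → ℝ} (hF : F = fun x => (μ {ω | R ω ≤ x}).toReal)
    (l : Filter ℝ)
    (hendpoint : (l = atTop ∧ ∀ x, F x < 1) ∨
      (l = nhdsWithin 1 (Iio 1) ∧ (∀ x < 1, F x < 1) ∧ ∀ x, 1 ≤ x → F x = 1))
    {c : ℝ} (hc : c < 1) :
    ∃ x, F x < 1 ∧ c < (μ {ω | R ω * Real.cos (Θ ω) ≤ x}).toReal := by
  rcases hendpoint with ⟨_, h1⟩ | ⟨_, h1, h2⟩
  · obtain ⟨k, hk⟩ := ex_quantile (μ := μ) (X := fun ω => R ω * Real.cos (Θ ω)) (fun k : ℕ => (k : ℝ))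
      Nat.mono_cast (ae_of_all _ fun ω => exists_nat_ge _) hc
    exact ⟨_, h1 _, hk⟩
  · have hΘ : ∀ᵐ ω ∂μ, Θ ω ∈ Ioo (-π) π ∧ Θ ω ≠ 0 := by
      refine ae_of_ae_map (p := fun θ => θ ∈ Ioo (-π) π ∧ θ ≠ 0) hΘm.aemeasurable ?_
      rw [hΘunif]
      apply Measure.ae_smul_measure
      filter_upwards [ae_restrict_mem measurableSet_Ioo,
        ae_restrict_of_ae (Measure.ae_ne volume (0 : ℝ))] with θ h1 h2
      exact ⟨h1, h2⟩
    have hR1 : ∀ᵐ ω ∂μ, R ω ≤ 1 := by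
      have := h2 1 le_rfl
      rw [hF] at this
      simp only at this
      have h3 : μ {ω | R ω ≤ 1} = 1 := by
        rw [← ENNReal.toReal_eq_one_iff]; exact this
      exact (mem_ae_iff_prob_eq_one (measurableSet_le hRm measurable_const)).2 h3
    obtain ⟨k, hk⟩ := ex_quantile (μ := μ) (X := fun ω => R ω * Real.cos (Θ ω))
      (fun k : ℕ => 1 - 1 / ((k : ℝ) + 1))
      (fun i j h => by
        have : (i : ℝ) ≤ j := by exact_mod_cast h
        simp only; gcongr) (by
        filter_upwards [hΘ, hR1, hRpos] with ω h3 h4 h5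
        have h6 : Real.cos (Θ ω) < 1 := by
          refine lt_of_le_of_ne (Real.cos_le_one _) fun h => h3.2 ?_
          have := Real.pi_pos
          exact (Real.cos_eq_one_iff_of_lt_of_lt (by linarith [h3.1.1]) (by linarith [h3.1.2])).1 h
        have h7 : R ω * Real.cos (Θ ω) < 1 := by nlinarith
        obtain ⟨k, hk⟩ := exists_nat_one_div_lt (sub_pos.2 h7)
        exact ⟨k, by linarith⟩) hc
    refine ⟨_, h1 _ ?_, hk⟩
    have : (0 : ℝ) < 1 / ((k : ℝ) + 1) := by positivity
    linarith

lemma core (hRm : Measurable R) (hΘm : Measurable Θ)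
    (hRpos : ∀ᵐ ω ∂μ, 0 < R ω)
    (hΘunif : μ.map Θ = (ENNReal.ofReal (2 * π))⁻¹ • volume.restrict (Ioo (-π) π))
    (hindep : IndepFun R Θ μ) {Q f : ℝ → ℝ} {l : Filter ℝ} [l.IsCountablyGenerated]
    (hQ : Q = fun u => μ.real {ω | u < R ω}) (h : GumbelTail Q f l)
    {G : ℝ → ℝ} (hG : G = fun x => (μ {ω | R ω * Real.cos (Θ ω) ≤ x}).toReal)
    (hex : ∀ c < (1 : ℝ), ∃ x, 0 < Q x ∧ c < G x)
    (b : ℕ → ℝ) (hb : ∀ n : ℕ, b n = sInf {x | 1 - 1 / (n : ℝ) < G x}) :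
    Tendsto b atTop l ∧
      Tendsto (fun n : ℕ => n * (dl f (b n) * Q (b n))) atTop (𝓝 (√(2 * π))) := by
  have hpi := Real.pi_pos
  have hXm : Measurable (fun ω => R ω * Real.cos (Θ ω)) := by fun_prop
  have hGT : ∀ t, μ.real {ω | t < R ω * Real.cos (Θ ω)} = 1 - G t := by
    intro u
    have : {ω | u < R ω * Real.cos (Θ ω)} = {ω | R ω * Real.cos (Θ ω) ≤ u}ᶜ := by ext ω; simp
    rw [this, probReal_compl_eq_one_sub (measurableSet_le hXm measurable_const), hG]
    rfl
  have hGmono : Monotone G := by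
    intro u v huv
    rw [hG]
    exact measureReal_mono (fun ω hω => le_trans hω huv)
  have htp : ∀ t, 0 < t → 1 - G t = (2 * π)⁻¹ * ∫ θ in (-π)..π, gk Q t (Real.cos θ) := by
    intro t ht
    rw [← hGT, tail_prob hRm hΘm hRpos hΘunif hindep ht, hQ]
  have hg1 : ∀ z : ℝ, ∫ s : ℝ, Real.exp (-(z + s ^ 2 / 2)) = √(2 * π) * Real.exp (-z) := by
    intro z
    simpa using gauss_total z 0
  have hlne : l.NeBot := by
    constructor
    rintro rfl
    obtain ⟨U, hU, hP⟩ := (h.ev (fun _ => False)).1 (by simp)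
    exact hP U le_rfl hU
  have hGlt : ∀ U, 0 < Q U → G U < 1 := by
    intro U hU
    have h1 := h.tail_lim (k := l) (b := id) tendsto_id 0
    rw [hg1] at h1
    have h2 := h1.eventually_const_lt (show 0 < √(2 * π) * Real.exp (-0) by positivity)
    obtain ⟨u, h2, h3, h4, h5, h6⟩ := (h2.and (h.ev_upos.and (h.dl_pos.and
      (h.ev_pos.and (h.ev_ge hU))))).exists
    simp only [id, mul_zero, add_zero] at h2
    have h7 := (div_pos_iff_of_pos_right (mul_pos h4 h5)).1 h2
    have h8 := htp u h3
    have h9 : 0 < 1 - G u := by rw [h8]; positivity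
    have := hGmono h6
    linarith
  have hinv : Tendsto (fun n : ℕ => 1 / (n : ℝ)) atTop (𝓝 0) := tendsto_one_div_atTop_nhds_zero_nat
  have hlow : ∀ U, 0 < Q U → ∀ᶠ n : ℕ in atTop, ∀ x, 1 - 1 / (n : ℝ) < G x → U ≤ x := by
    intro U hU
    filter_upwards [hinv.eventually_lt_const (sub_pos.2 (hGlt U hU))] with n hn x hx
    by_contra hc
    have := hGmono (not_le.1 hc).le
    linarith
  have hexn : ∀ᶠ n : ℕ in atTop, ∃ x, 0 < Q x ∧ 1 - 1 / (n : ℝ) < G x := by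
    filter_upwards [eventually_gt_atTop 0] with n hn
    have : (0 : ℝ) < 1 / n := by positivity
    exact hex _ (by linarith)
  have hQ0 : 0 < Q 0 := by rw [h.one 0 le_rfl]; norm_num
  have hbdd : ∀ᶠ n : ℕ in atTop, BddBelow {x | 1 - 1 / (n : ℝ) < G x} := by
    filter_upwards [hlow 0 hQ0] with n hn
    exact ⟨0, fun x hx => hn x hx⟩
  have hbt : Tendsto b atTop l := by
    apply h.tendsto_of
    · intro U hU
      filter_upwards [hlow U hU, hexn] with n h1 h2
      rw [hb]
      obtain ⟨x, _, hx⟩ := h2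
      exact le_csInf ⟨x, hx⟩ fun x hx => h1 x hx
    · filter_upwards [hbdd, hexn] with n h1 h2
      obtain ⟨x, hq, hx⟩ := h2
      refine lt_of_lt_of_le hq (h.anti ?_)
      rw [hb]
      exact csInf_le h1 hx
  refine ⟨hbt, ?_⟩
  have hT : ∀ z : ℝ, Tendsto (fun n => (1 - G (b n + f (b n) * z)) / (dl f (b n) * Q (b n))) atTop
      (𝓝 ((2 * π)⁻¹ * (√(2 * π) * Real.exp (-z)))) := by
    intro z
    have h1 := (h.tail_lim hbt z).const_mul (2 * π)⁻¹
    rw [hg1] at h1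
    refine h1.congr' ?_
    filter_upwards [hbt.eventually (h.ev_small (-z))] with n hn
    rw [htp _ (by linarith), mul_div_assoc]
  have hup : ∀ z : ℝ, 0 < z → ∀ᶠ n : ℕ in atTop, 1 - G (b n + f (b n) * z) ≤ 1 / n := by
    intro z hz
    filter_upwards [hexn] with n h2
    obtain ⟨x, _, hx⟩ := h2
    have : sInf {x | 1 - 1 / (n : ℝ) < G x} < b n + f (b n) * z := by
      rw [← hb]; have := mul_pos (h.fpos (b n)) hz; linarith
    obtain ⟨x', hx', hlt⟩ := exists_lt_of_csInf_lt ⟨x, hx⟩ this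
    have h3 := hGmono hlt.le
    have h4 : 1 - 1 / (n : ℝ) < G x' := hx'
    linarith
  have hdn : ∀ z : ℝ, z < 0 → ∀ᶠ n : ℕ in atTop, 1 / n ≤ 1 - G (b n + f (b n) * z) := by
    intro z hz
    filter_upwards [hbdd] with n h2
    by_contra hc
    have hm : b n + f (b n) * z ∈ {x | 1 - 1 / (n : ℝ) < G x} := by
      change 1 - 1 / (n : ℝ) < G _
      linarith
    have h3 := csInf_le h2 hm
    rw [← hb] at h3
    have := mul_neg_of_pos_of_neg (h.fpos (b n)) hz
    linarith
  have hcpos : ∀ᶠ n in atTop, 0 < dl f (b n) * Q (b n) := by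
    filter_upwards [hbt.eventually h.dl_pos, hbt.eventually h.ev_pos] with n h1 h2
    exact mul_pos h1 h2
  have hcont : Tendsto (fun z : ℝ => (2 * π)⁻¹ * (√(2 * π) * Real.exp (-z))) (𝓝 0)
      (𝓝 ((2 * π)⁻¹ * √(2 * π))) := by
    have : Continuous (fun z : ℝ => (2 * π)⁻¹ * (√(2 * π) * Real.exp (-z))) := by fun_prop
    simpa using this.tendsto 0
  have hmain : Tendsto (fun n : ℕ => (1 / (n : ℝ)) / (dl f (b n) * Q (b n))) atTop
      (𝓝 ((2 * π)⁻¹ * √(2 * π))) := by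
    rw [tendsto_order]
    constructor
    · intro c hc
      obtain ⟨z, hz1, hz2⟩ := (((hcont.mono_left (nhdsWithin_le_nhds (s := Ioi 0))).eventually_const_lt
        hc).and self_mem_nhdsWithin).exists
      filter_upwards [(hT z).eventually_const_lt hz1, hup z hz2, hcpos] with n h1 h2 h3
      refine lt_of_lt_of_le h1 ?_
      gcongr
    · intro c hc
      obtain ⟨z, hz1, hz2⟩ := (((hcont.mono_left (nhdsWithin_le_nhds (s := Iio 0))).eventually_lt_const
        hc).and self_mem_nhdsWithin).exists
      filter_upwards [(hT z).eventually_lt_const hz1, hdn z hz2, hcpos] with n h1 h2 h3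
      refine lt_of_le_of_lt ?_ h1
      gcongr
  have hs : √(2 * π) ^ 2 = 2 * π := Real.sq_sqrt (by positivity)
  have hs0 : 0 < √(2 * π) := by positivity
  have h5 := hmain.inv₀ (by positivity)
  have h6 : ((2 * π)⁻¹ * √(2 * π))⁻¹ = √(2 * π) := by
    have hi : (2 * π)⁻¹ = (√(2 * π) ^ 2)⁻¹ := by rw [hs]
    rw [hi]; field_simp
  rw [h6] at h5
  refine h5.congr fun n => ?_
  rw [inv_div, div_div_eq_mul_div, div_one, mul_comm]

lemma psi_lim {Q f : ℝ → ℝ} {l : Filter ℝ} (h : GumbelTail Q f l) {b : ℕ → ℝ}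
    (hb : Tendsto b atTop l) {ρ : ℕ → ℝ} (hρ : ∀ n, ρ n ∈ Ioc (0 : ℝ) 1)
    {lam : ℝ} (hlam : 0 < lam)
    (hHR : Tendsto (fun n : ℕ => (1 - ρ n) * b n / f (b n)) atTop (𝓝 (2 * lam ^ 2))) :
    Tendsto (fun n => Real.arccos (ρ n) / dl f (b n)) atTop (𝓝 (2 * lam)) := by
  have hρ1 : Tendsto ρ atTop (𝓝 1) := by
    have h1 := hHR.mul (h.tendsto_ratio.comp hb)
    rw [mul_zero] at h1
    have h2 := h1.const_sub 1
    rw [sub_zero] at h2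
    refine h2.congr' ?_
    filter_upwards [hb.eventually h.ev_upos] with n hn
    have := h.fpos (b n)
    simp only [Function.comp]
    field_simp
    ring
  have hψ : Tendsto (fun n => Real.arccos (ρ n) / 2) atTop (𝓝 0) := by
    have := ((Real.continuous_arccos.tendsto 1).comp hρ1).div_const 2
    rw [Real.arccos_one, zero_div] at this
    exact this
  have hs : Tendsto (fun n => Real.sinc (Real.arccos (ρ n) / 2)) atTop (𝓝 1) := by
    have := (Real.continuous_sinc.tendsto 0).comp hψ
    rw [Real.sinc_zero] at this
    exact this
  have h1 := ((hHR.const_mul 2).div (hs.pow 2) (by norm_num)).sqrt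
  rw [one_pow, div_one, show 2 * (2 * lam ^ 2) = (2 * lam) ^ 2 by ring,
    Real.sqrt_sq (by positivity)] at h1
  refine h1.congr' ?_
  filter_upwards [hb.eventually h.ev_upos, hb.eventually h.dl_pos,
    hs.eventually_const_lt zero_lt_one] with n h2 h3 h4
  have hf := h.fpos (b n)
  have h5 : 0 ≤ Real.arccos (ρ n) / dl f (b n) := div_nonneg (Real.arccos_nonneg _) h3.le
  rw [← Real.sqrt_sq h5]
  congr 1
  rw [div_pow, h.dl_sq h2]
  have e := one_sub_cos_sinc (Real.arccos (ρ n))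
  rw [Real.cos_arccos (by linarith [(hρ n).1]) (hρ n).2] at e
  simp only [Pi.div_apply]
  rw [e]
  field_simp

end prob2

theorem maxima_half_skew_gumbel_joint
{Ω : Type*} [MeasurableSpace Ω] (μ : Measure Ω) [IsProbabilityMeasure μ]
    (R Θ : Ω → ℝ) (hRm : Measurable R) (hΘm : Measurable Θ)
    (hRpos : ∀ᵐ ω ∂μ, 0 < R ω)
    (hΘunif : μ.map Θ = (ENNReal.ofReal (2 * π))⁻¹ • volume.restrict (Ioo (-π) π))
    (hindep : IndepFun R Θ μ)
    (X Y : Ω → ℝ)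
    (hX : X = fun ω => R ω * Real.cos (Θ ω))
    (hY : Y = fun ω => R ω * Real.sin (Θ ω))
    (F G : ℝ → ℝ)
    (hF : F = fun x => (μ {ω | R ω ≤ x}).toReal)
    (hG : G = fun x => (μ {ω | X ω ≤ x}).toReal)
    (w : ℝ → ℝ) (hw : ∀ x, 0 < w x)
    (l : Filter ℝ)
    (hendpoint : (l = atTop ∧ ∀ x, F x < 1) ∨
      (l = nhdsWithin 1 (Iio 1) ∧ (∀ x < 1, F x < 1) ∧ ∀ x, 1 ≤ x → F x = 1))
    (hGumbel : ∀ s : ℝ,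
      Tendsto (fun u => (1 - F (u + s / w u)) / (1 - F u)) l (𝓝 (Real.exp (-s))))
    (b a : ℕ → ℝ)
    (hb : ∀ n : ℕ, b n = sInf {x | 1 - 1 / (n : ℝ) < G x})
    (ha : ∀ n : ℕ, a n = 1 / w (b n))
    (ρ : ℕ → ℝ) (hρ : ∀ n, ρ n ∈ Ioc (0 : ℝ) 1)
    (lam : ℝ) (hlam : 0 < lam)
    (hHR : Tendsto (fun n : ℕ => (1 - ρ n) * b n / a n) atTop (𝓝 (2 * lam ^ 2))) :
    ∀ x y : ℝ,
      Tendsto (fun n : ℕ =>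
          ((μ {ω | X ω ≤ a n * x + b n ∧
            ρ n * |X ω| + Real.sqrt (1 - ρ n ^ 2) * Y ω ≤
              a n * y + b n + a n * Real.log 2}).toReal) ^ n)
        atTop (𝓝
          (Real.exp (-(stdNormalCDF (lam + (x - (y + Real.log 2)) / (2 * lam)) *
              Real.exp (-(y + Real.log 2)) +
            stdNormalCDF (lam + ((y + Real.log 2) - x) / (2 * lam)) * Real.exp (-x))) *
           Real.exp (-Real.exp (-(y + Real.log 2))))) := by
  intro x y
  have hpi := Real.pi_pos
  subst hX hY
  have h := mk_tail hRm hRpos hF hw hendpoint hGumbel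
  set Q : ℝ → ℝ := fun u => μ.real {ω | u < R ω} with hQ
  set f : ℝ → ℝ := fun u => 1 / w u with hf
  have hQF : ∀ u, Q u = 1 - F u := by
    intro u
    have : {ω | u < R ω} = {ω | R ω ≤ u}ᶜ := by ext ω; simp
    simp only [hQ]
    rw [this, probReal_compl_eq_one_sub (measurableSet_le hRm measurable_const), hF]
    rfl
  have hex : ∀ c < (1 : ℝ), ∃ x, 0 < Q x ∧ c < G x := by
    intro c hc
    obtain ⟨x, h1, h2⟩ := ex_q hRm hΘm hRpos hΘunif hF l hendpoint hc
    refine ⟨x, ?_, ?_⟩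
    · rw [hQF]; linarith
    · rw [hG]; exact h2
  have hcg : l.IsCountablyGenerated := by
    rcases hendpoint with ⟨rfl, _⟩ | ⟨rfl, _⟩ <;> infer_instance
  obtain ⟨hbt, hnc⟩ := core hRm hΘm hRpos hΘunif hindep hQ h hG hex b hb
  have haf : ∀ n, a n = f (b n) := ha
  simp only [haf] at hHR ⊢
  have hψ := psi_lim h hbt hρ hlam hHR
  have hj := h.joint_lim hbt x (y + Real.log 2) (ψ := fun n => Real.arccos (ρ n))
    (fun n => ⟨Real.arccos_nonneg _, Real.arccos_le_pi_div_two.2 (hρ n).1.le⟩) hψ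
  rw [gauss_max _ _ _ hlam] at hj
  set L := (stdNormalCDF (lam + (x - (y + Real.log 2)) / (2 * lam)) *
              Real.exp (-(y + Real.log 2)) +
            stdNormalCDF (lam + ((y + Real.log 2) - x) / (2 * lam)) * Real.exp (-x)) with hL
  have hm := hnc.mul (hj.const_mul (2 * π)⁻¹)
  have hval : √(2 * π) * ((2 * π)⁻¹ * (√(2 * π) * (L + Real.exp (-(y + Real.log 2))))) =
      L + Real.exp (-(y + Real.log 2)) := by
    have hs : √(2 * π) ^ 2 = 2 * π := Real.sq_sqrt (by positivity)
    have hs0 : 0 < √(2 * π) := by positivity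
    have hi : (2 * π)⁻¹ = (√(2 * π) ^ 2)⁻¹ := by rw [hs]
    rw [hi]; field_simp
  rw [hval] at hm
  set P : ℕ → ℝ := fun n => (μ {ω | R ω * Real.cos (Θ ω) ≤ f (b n) * x + b n ∧
            ρ n * |R ω * Real.cos (Θ ω)| + Real.sqrt (1 - ρ n ^ 2) * (R ω * Real.sin (Θ ω)) ≤
              f (b n) * y + b n + f (b n) * Real.log 2}).toReal with hP
  have hlim : Tendsto (fun n : ℕ => (n : ℝ) * (P n - 1)) atTop
      (𝓝 (-(L + Real.exp (-(y + Real.log 2))))) := by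
    refine hm.neg.congr' ?_
    filter_upwards [hbt.eventually (h.ev_small (-x)), hbt.eventually (h.ev_small (-(y + Real.log 2))),
      hbt.eventually h.dl_pos, hbt.eventually h.ev_pos] with n h1 h2 h3 h4
    have ht : 0 < b n + f (b n) * x := by linarith
    have ht' : 0 < b n + f (b n) * (y + Real.log 2) := by linarith
    have hu := union_prob hRm hΘm hRpos hΘunif hindep ht ht' (hρ n) hQ (h.gk_meas ht.le)
      (h.gk_meas ht'.le)
    have hms : MeasurableSet {ω | R ω * Real.cos (Θ ω) ≤ f (b n) * x + b n ∧
            ρ n * |R ω * Real.cos (Θ ω)| + Real.sqrt (1 - ρ n ^ 2) * (R ω * Real.sin (Θ ω)) ≤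
              f (b n) * y + b n + f (b n) * Real.log 2} := by
      rw [ofPred_and]
      exact (measurableSet_le (by fun_prop) measurable_const).inter
        (measurableSet_le (by fun_prop) measurable_const)
    have hcompl := probReal_compl_eq_one_sub (μ := μ) hms
    have hse : {ω | R ω * Real.cos (Θ ω) ≤ f (b n) * x + b n ∧
            ρ n * |R ω * Real.cos (Θ ω)| + Real.sqrt (1 - ρ n ^ 2) * (R ω * Real.sin (Θ ω)) ≤
              f (b n) * y + b n + f (b n) * Real.log 2}ᶜ =
        {ω | b n + f (b n) * x < R ω * Real.cos (Θ ω) ∨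
      b n + f (b n) * (y + Real.log 2) < ρ n * |R ω * Real.cos (Θ ω)| +
        √(1 - ρ n ^ 2) * (R ω * Real.sin (Θ ω))} := by
      ext ω
      simp only [mem_compl_iff, mem_ofPred_eq, not_and_or, not_le]
      rw [show f (b n) * x + b n = b n + f (b n) * x by ring,
        show f (b n) * y + b n + f (b n) * Real.log 2 = b n + f (b n) * (y + Real.log 2) by ring]
    rw [hse, hu] at hcompl
    have hPn : P n - 1 = -(1 - P n) := by ring
    rw [hPn]
    change _ = (n : ℝ) * -(1 - μ.real _)
    rw [← hcompl]
    field_simp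
  have hfin := Real.tendsto_one_add_pow_exp_of_tendsto hlim
  rw [← Real.exp_add, ← neg_add]
  refine hfin.congr fun n => ?_
  rw [add_sub_cancel]
end

section
/- For all x, y ∈ ℝ, lim_{n→∞} n·P(X > a_n·x + b_n, ρ_n|X| + √(1-ρ_n²)·Y > a_n·y + b_n) = (1 - Φ(λ + (y-x)/(2λ)))·e^{-x} + (1 - Φ(λ + (x-y)/(2λ)))·e^{-y}, where Φ is the standard normal distribution function. -/
open MeasureTheory Filter Real Set ProbabilityTheory Topology

theorem aux_tail_zero (T : ℝ → ℝ) (hT : Antitone T) (hT0 : ∀ u, 0 ≤ T u)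
    (l : Filter ℝ)
    (hl : ∀ P : ℝ → Prop, (∀ᶠ u in l, P u) ↔ ∃ U, 0 < T U ∧ ∀ v, U ≤ v → 0 < T v → P v)
    (w : ℝ → ℝ) (hw : ∀ x, 0 < w x)
    (hG : ∀ s : ℝ, Tendsto (fun u => T (u + s / w u) / T u) l (𝓝 (Real.exp (-s)))) :
    Tendsto T l (𝓝 0) := by
  have e1 : Real.exp (-1) < 1 / 2 := by
    have := Real.exp_neg_one_lt_d9
    linarith
  have h1 := (hG 1).eventually_lt_const e1
  have h2 := (hG 1).eventually_const_lt (Real.exp_pos (-1))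
  obtain ⟨U, hU, hUv⟩ := (hl _).1 (h1.and h2)
  have key : ∀ k : ℕ, ∃ v, U ≤ v ∧ 0 < T v ∧ T v ≤ (1 / 2) ^ k * T U := by
    intro k
    induction k with
    | zero => exact ⟨U, le_rfl, hU, by simp⟩
    | succ k ih =>
      obtain ⟨v, hv, hv0, hvk⟩ := ih
      obtain ⟨h3, h4⟩ := hUv v hv hv0
      refine ⟨v + 1 / w v, ?_, ?_, ?_⟩
      · have := hw v
        have : 0 < 1 / w v := by positivity
        linarith
      · by_contra hc
        have : T (v + 1 / w v) = 0 := le_antisymm (not_lt.1 hc) (hT0 _)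
        rw [this, zero_div] at h4
        exact lt_irrefl _ h4
      · rw [div_lt_iff₀ hv0] at h3
        rw [pow_succ]
        nlinarith
  rw [tendsto_order]
  constructor
  · intro c hc
    exact Eventually.of_forall fun u => lt_of_lt_of_le hc (hT0 u)
  · intro c hc
    obtain ⟨k, hk⟩ := exists_pow_lt_of_lt_one (div_pos hc hU) (by norm_num : (1 / 2 : ℝ) < 1)
    rw [lt_div_iff₀ hU] at hk
    obtain ⟨v, hv, hv0, hvk⟩ := key k
    rw [hl]
    refine ⟨v, hv0, fun u hu _ => ?_⟩
    have := hT hu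
    linarith

theorem aux_ev_pos (T : ℝ → ℝ) (l : Filter ℝ)
    (hl : ∀ P : ℝ → Prop, (∀ᶠ u in l, P u) ↔ ∃ U, 0 < T U ∧ ∀ v, U ≤ v → 0 < T v → P v)
    (hne : ∃ U, 0 < T U) :
    ∀ᶠ u in l, 0 < T u := by
  rw [hl]
  obtain ⟨U, hU⟩ := hne
  exact ⟨U, hU, fun _ _ h => h⟩

theorem aux_tail_bound (T : ℝ → ℝ) (hT : Antitone T) (hT0 : ∀ u, 0 ≤ T u)
    (l : Filter ℝ)
    (hl : ∀ P : ℝ → Prop, (∀ᶠ u in l, P u) ↔ ∃ U, 0 < T U ∧ ∀ v, U ≤ v → 0 < T v → P v)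
    (w : ℝ → ℝ) (hw : ∀ x, 0 < w x)
    (hG : ∀ s : ℝ, Tendsto (fun u => T (u + s / w u) / T u) l (𝓝 (Real.exp (-s)))) :
    ∀ᶠ u in l, ∀ s : ℝ, 0 ≤ s → T (u + s / w u) ≤ 2 / (1 + s) * T u := by
  have e1 : Real.exp (-1) < 1 / 2 := by
    have := Real.exp_neg_one_lt_d9
    linarith
  have e1' : 3 / 10 < Real.exp (-1) := by
    have := Real.exp_neg_one_gt_d9
    linarith
  have e3 : Real.exp (-3) < 6 / 100 := by
    have h : Real.exp (-3) = Real.exp (-1) ^ 3 := by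
      rw [← Real.exp_nat_mul]; norm_num
    rw [h]
    have h5 : Real.exp (-1) < 0.37 := by
      have := Real.exp_neg_one_lt_d9
      linarith
    calc Real.exp (-1) ^ 3 ≤ 0.37 ^ 3 := by gcongr
      _ < 6 / 100 := by norm_num
  have h1 := (hG 1).eventually_lt_const e1
  have h2 := (hG 1).eventually_const_lt e1'
  have h3 := (hG 3).eventually_lt_const e3
  obtain ⟨U, hU, hUv⟩ := (hl _).1 ((h1.and h2).and h3)
  have hpos : ∀ v, U ≤ v → 0 < T v → U ≤ v + 1 / w v ∧ 0 < T (v + 1 / w v) := by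
    intro v hv hv0
    obtain ⟨⟨h4, h5⟩, h6⟩ := hUv v hv hv0
    constructor
    · have := hw v
      have : 0 < 1 / w v := by positivity
      linarith
    · rw [lt_div_iff₀ hv0] at h5
      nlinarith
  have hstep : ∀ v, U ≤ v → 0 < T v → 1 / w (v + 1 / w v) ≤ 2 * (1 / w v) := by
    intro v hv hv0
    obtain ⟨⟨h4, h5⟩, h6⟩ := hUv v hv hv0
    obtain ⟨h7, h8⟩ := hpos v hv hv0
    obtain ⟨⟨h9, h10⟩, h11⟩ := hUv _ h7 h8
    by_contra hc
    push Not at hc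
    have h12 : T (v + 1 / w v + 1 / w (v + 1 / w v)) ≤ T (v + 3 / w v) := by
      apply hT
      have : 3 / w v = 3 * (1 / w v) := by ring
      rw [this]; linarith
    rw [lt_div_iff₀ hv0] at h5
    rw [div_lt_iff₀ hv0] at h6
    rw [lt_div_iff₀ h8] at h10
    linarith
  have key : ∀ k : ℕ, ∀ v, U ≤ v → 0 < T v →
      T (v + (2 ^ k - 1) / w v) ≤ (1 / 2) ^ k * T v := by
    intro k
    induction k with
    | zero => intro v hv hv0; simp
    | succ k ih =>
      intro v hv hv0
      obtain ⟨h7, h8⟩ := hpos v hv hv0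
      have h9 := hstep v hv hv0
      obtain ⟨⟨h4, h5⟩, h6⟩ := hUv v hv hv0
      rw [div_lt_iff₀ hv0] at h4
      have h10 := ih _ h7 h8
      have hk : (0 : ℝ) ≤ 2 ^ k - 1 := by
        have := one_le_pow₀ (n := k) (by norm_num : (1 : ℝ) ≤ 2)
        linarith
      have h11 : T (v + (2 ^ (k + 1) - 1) / w v) ≤
          T (v + 1 / w v + (2 ^ k - 1) / w (v + 1 / w v)) := by
        apply hT
        have h12 : (2 ^ k - 1) / w (v + 1 / w v) = (2 ^ k - 1) * (1 / w (v + 1 / w v)) := by ring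
        have h13 : ((2 : ℝ) ^ (k + 1) - 1) / w v
          = 1 / w v + (2 ^ k - 1) * (2 * (1 / w v)) := by rw [pow_succ]; ring
        rw [h12, h13, ← add_assoc]
        gcongr
      have hp : (0 : ℝ) < (1 / 2) ^ k := by positivity
      refine h11.trans (h10.trans ?_)
      rw [pow_succ]
      nlinarith
  rw [hl]
  refine ⟨U, hU, fun v hv hv0 s hs => ?_⟩
  obtain ⟨k, hk1, hk2⟩ := exists_nat_pow_near (by linarith : (1 : ℝ) ≤ 1 + s)
    (by norm_num : (1 : ℝ) < 2)
  have hwv := hw v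
  calc T (v + s / w v) ≤ T (v + (2 ^ k - 1) / w v) := by
        apply hT
        gcongr
        linarith
    _ ≤ (1 / 2) ^ k * T v := key k v hv hv0
    _ ≤ 2 / (1 + s) * T v := by
        gcongr
        rw [le_div_iff₀ (by linarith)]
        rw [pow_succ] at hk2
        calc (1 / 2 : ℝ) ^ k * (1 + s) ≤ (1 / 2) ^ k * (2 ^ k * 2) := by gcongr
          _ = 2 := by rw [← mul_assoc, ← mul_pow]; norm_num

theorem aux_pos (T : ℝ → ℝ) (hT1 : ∀ u ≤ 0, T u = 1) (l : Filter ℝ) (h0 : Tendsto T l (𝓝 0)) :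
    ∀ᶠ u in l, 0 < u := by
  filter_upwards [h0.eventually_lt_const (zero_lt_one)] with u hu
  by_contra hc
  rw [hT1 u (not_lt.1 hc)] at hu
  exact lt_irrefl _ hu

theorem aux_ratio (T : ℝ → ℝ)
    (hT1 : ∀ u ≤ 0, T u = 1) (l : Filter ℝ) (h0 : Tendsto T l (𝓝 0))
    (hp : ∀ᶠ u in l, 0 < T u)
    (w : ℝ → ℝ) (hw : ∀ x, 0 < w x)
    (hG : ∀ s : ℝ, Tendsto (fun u => T (u + s / w u) / T u) l (𝓝 (Real.exp (-s)))) :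
    Tendsto (fun u => 1 / w u / u) l (𝓝 0) := by
  have hpos := aux_pos T hT1 l h0
  rw [tendsto_order]
  constructor
  · intro c hc
    filter_upwards [hpos] with u hu
    have := hw u
    have : 0 < 1 / w u / u := by positivity
    linarith
  · intro c hc
    have h1 : Tendsto (fun u => T (u + (-(1 / c)) / w u) / T u * T u) l (𝓝 (Real.exp (-(-(1/c))) * 0)) :=
      (hG _).mul h0
    rw [mul_zero] at h1
    filter_upwards [hpos, h1.eventually_lt_const zero_lt_one, hp] with u hu h2 hTu
    rw [div_mul_cancel₀ _ hTu.ne'] at h2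
    have h3 : 0 < u + (-(1 / c)) / w u := by
      by_contra hcc
      rw [hT1 _ (not_lt.1 hcc)] at h2
      exact lt_irrefl _ h2
    rw [div_lt_iff₀ hu]
    have h4 : (-(1 / c)) / w u = - ((1 / w u) / c) := by ring
    rw [h4] at h3
    have h5 : (1 / w u) / c < u := by linarith
    rwa [div_lt_iff₀ hc, mul_comm] at h5

theorem aux_seq (T : ℝ → ℝ) (hT : Antitone T) 
    (l : Filter ℝ) 
    (hp : ∀ᶠ u in l, 0 < T u)
    (w : ℝ → ℝ) (hw : ∀ x, 0 < w x)
    (hG : ∀ s : ℝ, Tendsto (fun u => T (u + s / w u) / T u) l (𝓝 (Real.exp (-s))))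
    (b : ℕ → ℝ) (hb : Tendsto b atTop l) (c : ℕ → ℝ) (z : ℝ) (hc : Tendsto c atTop (𝓝 z)) :
    Tendsto (fun n => T (b n + c n / w (b n)) / T (b n)) atTop (𝓝 (Real.exp (-z))) := by
  have hcont : Tendsto (fun s => Real.exp (-s)) (𝓝 z) (𝓝 (Real.exp (-z))) :=
    (Real.continuous_exp.comp continuous_neg).tendsto z
  rw [tendsto_order]
  constructor
  · intro A hA
    obtain ⟨s, hs, hsz⟩ : ∃ s, A < Real.exp (-s) ∧ z < s := by
      have h1 := (hcont.mono_left (nhdsWithin_le_nhds (s := Ioi z))).eventually_const_lt hA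
      exact (h1.and self_mem_nhdsWithin).exists
    have h2 := ((hG s).comp hb).eventually_const_lt hs
    filter_upwards [h2, hc.eventually_lt_const hsz, hb.eventually hp] with n h3 h4 h5
    refine lt_of_lt_of_le h3 ?_
    have := hw (b n)
    simp only [Function.comp]
    gcongr
    apply hT
    gcongr
  · intro A hA
    obtain ⟨s, hs, hsz⟩ : ∃ s, Real.exp (-s) < A ∧ s < z := by
      have h1 := (hcont.mono_left (nhdsWithin_le_nhds (s := Iio z))).eventually_lt_const hA
      exact (h1.and self_mem_nhdsWithin).exists
    have h2 := ((hG s).comp hb).eventually_lt_const hs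
    filter_upwards [h2, hc.eventually_const_lt hsz, hb.eventually hp] with n h3 h4 h5
    refine lt_of_le_of_lt ?_ h3
    have := hw (b n)
    simp only [Function.comp]
    gcongr
    apply hT
    gcongr

theorem aux_prob {Ω : Type*} [MeasurableSpace Ω] (μ : Measure Ω) [IsProbabilityMeasure μ]
    (R Θ : Ω → ℝ) (hRm : Measurable R) (hΘm : Measurable Θ)
    (hΘunif : μ.map Θ = (ENNReal.ofReal (2 * π))⁻¹ • volume.restrict (Ioo (-π) π))
    (hindep : IndepFun R Θ μ) (S : Set ℝ) (hS : MeasurableSet S) (h : ℝ → ℝ) (hh : Measurable h) :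
    (μ {ω | Θ ω ∈ S ∧ h (Θ ω) < R ω}).toReal = (2 * π)⁻¹ *
      ∫ θ, (Ioo (-π) π ∩ S).indicator (fun θ => (μ {ω | h θ < R ω}).toReal) θ := by
  have hprod := (indepFun_iff_map_prod_eq_prod_map_map hΘm.aemeasurable hRm.aemeasurable).1 hindep.symm
  have hE : MeasurableSet {p : ℝ × ℝ | p.1 ∈ S ∧ h p.1 < p.2} :=
    (measurable_fst hS).inter (measurableSet_lt (hh.comp measurable_fst) measurable_snd)
  have h1 : μ {ω | Θ ω ∈ S ∧ h (Θ ω) < R ω} =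
      (μ.map (fun ω => (Θ ω, R ω))) {p : ℝ × ℝ | p.1 ∈ S ∧ h p.1 < p.2} := by
    rw [Measure.map_apply (hΘm.prodMk hRm) hE]
    rfl
  have : IsProbabilityMeasure (μ.map R) := Measure.isProbabilityMeasure_map hRm.aemeasurable
  have : IsProbabilityMeasure (μ.map Θ) := Measure.isProbabilityMeasure_map hΘm.aemeasurable
  have h2 : ∀ θ, (μ.map R) (Prod.mk θ ⁻¹' {p : ℝ × ℝ | p.1 ∈ S ∧ h p.1 < p.2}) =
      S.indicator (fun θ => μ {ω | h θ < R ω}) θ := by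
    intro θ
    by_cases hθ : θ ∈ S
    · rw [indicator_of_mem hθ, Measure.map_apply hRm (measurable_prodMk_left hE)]
      congr 1
      ext ω
      simp [hθ]
    · rw [indicator_of_notMem hθ, Measure.map_apply hRm (measurable_prodMk_left hE)]
      convert measure_empty (μ := μ)
      ext ω
      simp [hθ]
  have hmeas : Measurable (fun θ => S.indicator (fun θ => μ {ω | h θ < R ω}) θ) := by
    have := measurable_measure_prodMk_left (ν := μ.map R) hE
    rwa [funext h2] at this
  rw [h1, hprod, Measure.prod_apply hE, lintegral_congr h2,
    ← integral_toReal hmeas.aemeasurable, hΘunif, integral_smul_measure,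
    ← integral_indicator measurableSet_Ioo]
  · rw [ENNReal.toReal_inv, ENNReal.toReal_ofReal (by positivity), smul_eq_mul]
    congr 1
    apply integral_congr_ae
    refine Eventually.of_forall fun θ => ?_
    rw [← indicator_indicator]
    congr 1
    ext θ
    by_cases hθ : θ ∈ S <;> simp [hθ]
  · refine Eventually.of_forall fun θ => ?_
    by_cases hθ : θ ∈ S <;> simp [hθ]

theorem aux_dct (T : ℝ → ℝ) (hT : Antitone T) (hT0 : ∀ u, 0 ≤ T u)
    (l : Filter ℝ)
    (hl : ∀ P : ℝ → Prop, (∀ᶠ u in l, P u) ↔ ∃ U, 0 < T U ∧ ∀ v, U ≤ v → 0 < T v → P v)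
    (hp : ∀ᶠ u in l, 0 < T u)
    (w : ℝ → ℝ) (hw : ∀ x, 0 < w x)
    (hG : ∀ s : ℝ, Tendsto (fun u => T (u + s / w u) / T u) l (𝓝 (Real.exp (-s))))
    (b : ℕ → ℝ) (hb : Tendsto b atTop l) (e : ℕ → ℝ) (he : ∀ᶠ n in atTop, 0 < e n)
    (S : ℕ → Set ℝ) (hS : ∀ n, MeasurableSet (S n)) (h : ℕ → ℝ → ℝ) (hh : ∀ n, Measurable (h n))
    (z : ℝ → ℝ)
    (hmem : ∀ t, ∀ᶠ n in atTop, e n * t ∈ S n)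
    (hz : ∀ t, Tendsto (fun n => (h n (e n * t) - b n) * w (b n)) atTop (𝓝 (z t)))
    (x c : ℝ) (hc : 0 < c)
    (hdom : ∀ᶠ n in atTop, ∀ t, e n * t ∈ S n →
      b n + (x + c * t ^ 2) / w (b n) ≤ h n (e n * t)) :
    Tendsto (fun n => (e n * T (b n))⁻¹ * ∫ θ, (S n).indicator (fun θ => T (h n θ)) θ) atTop
      (𝓝 (∫ t, Real.exp (-z t))) := by
  have hmain : Tendsto (fun n => ∫ t, (S n).indicator (fun θ => T (h n θ)) (e n * t) / T (b n)) atTop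
      (𝓝 (∫ t, Real.exp (-z t))) := by
    have hTm : Measurable T := hT.measurable
    set K : ℝ := 2 + 2 * Real.exp (-x) * (1 + |x|) with hK
    apply tendsto_integral_filter_of_dominated_convergence
      (fun t => K * (1 + c / 2 * t ^ 2)⁻¹)
    · refine Eventually.of_forall fun n => ?_
      apply Measurable.aestronglyMeasurable
      apply Measurable.div_const
      exact ((hTm.comp (hh n)).indicator (hS n)).comp (measurable_const_mul _)
    · have hbd := hb.eventually (aux_tail_bound T hT hT0 l hl w hw hG)
      have hx2 := ((hG x).comp hb).eventually_lt_const
        (show Real.exp (-x) < 2 * Real.exp (-x) by linarith [Real.exp_pos (-x)])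
      filter_upwards [hdom, hbd, hx2, hb.eventually hp] with n h1 h2 h3 h4
      refine Eventually.of_forall fun t => ?_
      have hpos : 0 < 1 + c / 2 * t ^ 2 := by positivity
      have hKpos : 0 ≤ K := by positivity
      have hwn := hw (b n)
      rw [Real.norm_of_nonneg (div_nonneg (indicator_nonneg (fun θ _ => hT0 _) _) h4.le)]
      by_cases ht : e n * t ∈ S n
      · rw [indicator_of_mem ht, div_le_iff₀ h4]
        have h5 := hT (h1 t ht)
        refine h5.trans ?_
        by_cases hc2 : 2 * |x| ≤ c * t ^ 2
        · have hxx := neg_abs_le x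
          have hxx0 := abs_nonneg x
          refine (h2 (x + c * t ^ 2) (by linarith)).trans ?_
          rw [← div_eq_mul_inv]
          have hK2 : 2 ≤ K := by
            rw [hK]
            have : 0 ≤ 2 * Real.exp (-x) * (1 + |x|) := by positivity
            linarith
          refine mul_le_mul_of_nonneg_right ?_ h4.le
          exact div_le_div₀ hKpos hK2 hpos (by linarith)
        · push Not at hc2
          simp only [Function.comp] at h3
          rw [div_lt_iff₀ h4] at h3
          have h6 : T (b n + (x + c * t ^ 2) / w (b n)) ≤ T (b n + x / w (b n)) := by
            apply hT
            gcongr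
            have : 0 ≤ c * t ^ 2 := by positivity
            linarith
          refine (h6.trans h3.le).trans ?_
          refine mul_le_mul_of_nonneg_right ?_ h4.le
          rw [← div_eq_mul_inv, le_div_iff₀ hpos, hK]
          have : 2 * rexp (-x) * (1 + c / 2 * t ^ 2) ≤ 2 * Real.exp (-x) * (1 + |x|) := by
            gcongr
            linarith
          linarith
      · rw [indicator_of_notMem ht]
        simp only [zero_div]
        positivity
    · apply Integrable.const_mul
      have := integrable_inv_one_add_sq.comp_mul_left' (R := √(c / 2)) (by positivity)
      refine this.congr (Eventually.of_forall fun t => ?_)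
      simp only
      rw [mul_pow, Real.sq_sqrt (by positivity)]
    · refine Eventually.of_forall fun t => ?_
      have h1 := aux_seq T hT l hp w hw hG b hb _ _ (hz t)
      refine h1.congr' ?_
      filter_upwards [hmem t] with n hn
      rw [indicator_of_mem hn]
      have := (hw (b n)).ne'
      rw [mul_div_cancel_right₀ _ this]
      congr 2
      ring
  refine hmain.congr' ?_
  filter_upwards [he] with n hn
  rw [integral_div, Measure.integral_comp_mul_left, abs_of_pos (inv_pos.2 hn), smul_eq_mul, mul_inv]
  ring

theorem aux_sin (e : ℕ → ℝ) (he : ∀ᶠ n in atTop, 0 < e n) (he0 : Tendsto e atTop (𝓝 0)) (t : ℝ) :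
    Tendsto (fun n => Real.sin (e n * t) / e n) atTop (𝓝 t) := by
  have h1 : HasDerivAt (fun s : ℝ => Real.sin (s * t)) t 0 := by
    have := ((hasDerivAt_id (0 : ℝ)).mul_const t).sin
    simpa using this
  have h2 := hasDerivAt_iff_tendsto_slope.1 h1
  have h3 : Tendsto e atTop (𝓝[≠] 0) := by
    rw [tendsto_nhdsWithin_iff]
    exact ⟨he0, he.mono fun n hn => hn.ne'⟩
  refine (h2.comp h3).congr fun n => ?_
  simp [slope_def_field]

theorem aux_cos (e : ℕ → ℝ) (he : ∀ᶠ n in atTop, 0 < e n) (he0 : Tendsto e atTop (𝓝 0)) (t : ℝ) :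
    Tendsto (fun n => (1 - Real.cos (e n * t)) / e n ^ 2) atTop (𝓝 (t ^ 2 / 2)) := by
  have h1 := ((aux_sin e he he0 (t / 2)).pow 2).const_mul 2
  have h2 : 2 * (t / 2) ^ 2 = t ^ 2 / 2 := by ring
  rw [h2] at h1
  refine h1.congr fun n => ?_
  have h3 : Real.cos (e n * t) = 1 - 2 * Real.sin (e n * (t / 2)) ^ 2 := by
    have : e n * t = 2 * (e n * (t / 2)) := by ring
    rw [this, Real.cos_two_mul, Real.cos_sq']
    ring
  rw [h3, div_pow]
  ring

theorem aux_one (C e : ℕ → ℝ) (he0 : Tendsto e atTop (𝓝 0)) (he : ∀ᶠ n in atTop, 0 < e n)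
    (q : ℝ) (hq : Tendsto (fun n => (1 - C n) / e n ^ 2) atTop (𝓝 q)) :
    Tendsto C atTop (𝓝 1) := by
  have h1 := (hq.mul (he0.pow 2)).const_sub 1
  have h2 : 1 - q * 0 ^ 2 = 1 := by ring
  rw [h2] at h1
  refine h1.congr' ?_
  filter_upwards [he] with n hn
  field_simp
  ring

theorem aux_zlim (C e b w : ℕ → ℝ) (he0 : Tendsto e atTop (𝓝 0)) (he : ∀ᶠ n in atTop, 0 < e n)
    (q x : ℝ) (hq : Tendsto (fun n => (1 - C n) / e n ^ 2) atTop (𝓝 q))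
    (hw : ∀ n, 0 < w n) (heq : ∀ᶠ n in atTop, e n ^ 2 = 1 / w n / b n) :
    Tendsto (fun n => ((1 / w n * x + b n) / C n - b n) * w n) atTop (𝓝 (x + q)) := by
  have hC := aux_one C e he0 he q hq
  have h1 := (hq.const_add x).div hC one_ne_zero
  rw [div_one] at h1
  refine h1.congr' ?_
  filter_upwards [he, heq, hC.eventually_const_lt zero_lt_one] with n hn h2 h3
  have hwn := (hw n).ne'
  have hbn : b n ≠ 0 := by
    rintro h
    rw [h, div_zero] at h2
    have := pow_pos hn 2
    linarith
  simp only [Pi.div_apply]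
  rw [h2]
  field_simp
  ring

theorem aux_g (ρ e : ℕ → ℝ) (he0 : Tendsto e atTop (𝓝 0)) (he : ∀ᶠ n in atTop, 0 < e n)
    (lam : ℝ) (hlam : 0 ≤ lam) 
    (h : Tendsto (fun n => (1 - ρ n) / e n ^ 2) atTop (𝓝 (2 * lam ^ 2))) (t : ℝ) :
    Tendsto (fun n => (1 - (ρ n * Real.cos (e n * t) + √(1 - ρ n ^ 2) * Real.sin (e n * t))) / e n ^ 2)
      atTop (𝓝 ((t - 2 * lam) ^ 2 / 2)) := by
  have hρ1 := aux_one ρ e he0 he _ h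
  have h1 : Tendsto (fun n => √((1 - ρ n) / e n ^ 2 * (1 + ρ n))) atTop
      (𝓝 √(2 * lam ^ 2 * (1 + 1))) := (h.mul (hρ1.const_add 1)).sqrt
  have h2 : √(2 * lam ^ 2 * (1 + 1)) = 2 * lam := by
    rw [show 2 * lam ^ 2 * (1 + 1) = (2 * lam) ^ 2 by ring, Real.sqrt_sq (by linarith)]
  rw [h2] at h1
  have h3 := (h.add (hρ1.mul (aux_cos e he he0 t))).sub (h1.mul (aux_sin e he he0 t))
  have h4 : 2 * lam ^ 2 + 1 * (t ^ 2 / 2) - 2 * lam * t = (t - 2 * lam) ^ 2 / 2 := by ring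
  rw [h4] at h3
  refine h3.congr' ?_
  filter_upwards [he] with n hn
  have h5 : √((1 - ρ n) / e n ^ 2 * (1 + ρ n)) = √(1 - ρ n ^ 2) / e n := by
    rw [show (1 - ρ n) / e n ^ 2 * (1 + ρ n) = (1 - ρ n ^ 2) / e n ^ 2 by ring,
      Real.sqrt_div' _ (by positivity), Real.sqrt_sq hn.le]
  rw [h5]
  field_simp
  ring

theorem aux_gauss_int : Integrable (fun s : ℝ => Real.exp (-(s ^ 2) / 2)) := by
  refine (integrable_exp_neg_mul_sq (b := 1 / 2) (by norm_num)).congr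
    (Eventually.of_forall fun s => ?_)
  simp only
  congr 1; ring

theorem aux_gauss : ∫ s : ℝ, Real.exp (-(s ^ 2) / 2) = √(2 * π) := by
  have := integral_gaussian (1 / 2)
  rw [show π / (1 / 2) = 2 * π by ring] at this
  rw [← this]
  congr 1
  ext s
  congr 1; ring

theorem aux_Phi (d : ℝ) : ∫ s in Ioi d, Real.exp (-(s ^ 2) / 2) = √(2 * π) * (1 - stdNormalCDF d) := by
  have h := integral_add_compl (μ := volume) (measurableSet_Iic (a := d)) aux_gauss_int
  rw [compl_Iic, aux_gauss] at h
  unfold stdNormalCDF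
  have hp : √(2 * π) ≠ 0 := by positivity
  rw [mul_sub, mul_one, mul_inv_cancel_left₀ hp]
  linarith

theorem aux_final0 (x : ℝ) :
    ∫ t : ℝ, Real.exp (-(max (x + t ^ 2 / 2) (x + (t - 2 * 0) ^ 2 / 2))) = √(2 * π) * Real.exp (-x) := by
  rw [← aux_gauss, ← integral_mul_const]
  congr 1
  ext t
  rw [← Real.exp_add]
  congr 1
  simp
  ring

theorem aux_final (x y lam : ℝ) (hlam : 0 < lam) :
    ∫ t : ℝ, Real.exp (-(max (x + t ^ 2 / 2) (y + (t - 2 * lam) ^ 2 / 2))) = √(2 * π) *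
      ((1 - stdNormalCDF (lam + (y - x) / (2 * lam))) * Real.exp (-x) +
           (1 - stdNormalCDF (lam + (x - y) / (2 * lam))) * Real.exp (-y)) := by
  set d := lam + (y - x) / (2 * lam) with hd
  have hdl : 2 * lam * d = 2 * lam ^ 2 + (y - x) := by rw [hd]; field_simp
  have hd' : lam + (x - y) / (2 * lam) = 2 * lam - d := by rw [hd]; field_simp; ring
  have hint : Integrable (fun t : ℝ => Real.exp (-(max (x + t ^ 2 / 2) (y + (t - 2 * lam) ^ 2 / 2)))) := by
    refine (aux_gauss_int.const_mul (Real.exp (-x))).mono' ?_ ?_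
    · apply Continuous.aestronglyMeasurable
      fun_prop
    · refine Eventually.of_forall fun t => ?_
      rw [Real.norm_of_nonneg (Real.exp_pos _).le, ← Real.exp_add]
      apply Real.exp_le_exp.2
      have := le_max_left (x + t ^ 2 / 2) (y + (t - 2 * lam) ^ 2 / 2)
      linarith
  rw [← integral_add_compl (measurableSet_Ioi (a := d)) hint, compl_Ioi, mul_add, ← mul_assoc,
    ← mul_assoc, hd', ← aux_Phi, ← aux_Phi]
  congr 1
  · rw [← integral_mul_const]
    apply setIntegral_congr_fun measurableSet_Ioi
    intro t ht
    simp only [mem_Ioi] at ht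
    have : y + (t - 2 * lam) ^ 2 / 2 ≤ x + t ^ 2 / 2 := by nlinarith
    simp only [max_eq_left this]
    rw [← Real.exp_add]
    congr 1; ring
  · rw [← integral_Ici_eq_integral_Ioi, ← integral_indicator measurableSet_Ici,
      ← integral_sub_left_eq_self _ volume (2 * lam), ← integral_indicator measurableSet_Iic,
      ← integral_mul_const]
    congr 1
    ext t
    by_cases ht : t ∈ Iic d
    · have ht2 : 2 * lam - t ∈ Ici (2 * lam - d) := by
        simp only [mem_Ici, mem_Iic] at *; linarith
      rw [indicator_of_mem ht, indicator_of_mem ht2]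
      simp only [mem_Iic] at ht
      have : x + t ^ 2 / 2 ≤ y + (t - 2 * lam) ^ 2 / 2 := by nlinarith
      simp only [max_eq_right this]
      rw [← Real.exp_add]
      congr 1; ring
    · have ht2 : 2 * lam - t ∉ Ici (2 * lam - d) := by
        simp only [mem_Ici, mem_Iic] at *; intro h; apply ht; linarith
      rw [indicator_of_notMem ht, indicator_of_notMem ht2]
      simp

theorem aux_core {Ω : Type*} [MeasurableSpace Ω] (μ : Measure Ω) [IsProbabilityMeasure μ]
    (R Θ : Ω → ℝ) (hRm : Measurable R) (hΘm : Measurable Θ)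
    (hRpos : ∀ᵐ ω ∂μ, 0 < R ω)
    (hΘunif : μ.map Θ = (ENNReal.ofReal (2 * π))⁻¹ • volume.restrict (Ioo (-π) π))
    (hindep : IndepFun R Θ μ)
    (T : ℝ → ℝ) (hTdef : T = fun u => (μ {ω | u < R ω}).toReal)
    (hT : Antitone T) (hT0 : ∀ u, 0 ≤ T u) (hT1 : ∀ u ≤ 0, T u = 1)
    (l : Filter ℝ)
    (hl : ∀ P : ℝ → Prop, (∀ᶠ u in l, P u) ↔ ∃ U, 0 < T U ∧ ∀ v, U ≤ v → 0 < T v → P v)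
    (w : ℝ → ℝ) (hw : ∀ x, 0 < w x)
    (hG : ∀ s : ℝ, Tendsto (fun u => T (u + s / w u) / T u) l (𝓝 (Real.exp (-s))))
    (b : ℕ → ℝ) (hb : Tendsto b atTop l)
    (ρ : ℕ → ℝ) 
    (lam : ℝ) (hlam : 0 ≤ lam)
    (hHR : Tendsto (fun n : ℕ => (1 - ρ n) * b n / (1 / w (b n))) atTop (𝓝 (2 * lam ^ 2)))
    (x y : ℝ) :
    Tendsto (fun n : ℕ => (√(1 / w (b n) / b n) * T (b n))⁻¹ * (2 * π) *
        (μ {ω | 1 / w (b n) * x + b n < R ω * Real.cos (Θ ω) ∧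
            1 / w (b n) * y + b n < ρ n * |R ω * Real.cos (Θ ω)| +
              Real.sqrt (1 - ρ n ^ 2) * (R ω * Real.sin (Θ ω))}).toReal) atTop
      (𝓝 (∫ t : ℝ, Real.exp (-(max (x + t ^ 2 / 2) (y + (t - 2 * lam) ^ 2 / 2))))) := by
  have hTz := aux_tail_zero T hT hT0 l hl w hw hG
  have hp : ∀ᶠ u in l, 0 < T u := aux_ev_pos T l hl ⟨0, by rw [hT1 0 le_rfl]; exact zero_lt_one⟩
  have hratio := (aux_ratio T hT1 l hTz hp w hw hG).comp hb
  have hbpos := hb.eventually (aux_pos T hT1 l hTz)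
  set e : ℕ → ℝ := fun n => √(1 / w (b n) / b n) with he_def
  have he0 : Tendsto e atTop (𝓝 0) := by
    have := hratio.sqrt
    rwa [Real.sqrt_zero] at this
  have he : ∀ᶠ n in atTop, 0 < e n := by
    filter_upwards [hbpos] with n hn
    have := hw (b n)
    simp only [he_def]
    positivity
  have heq : ∀ᶠ n in atTop, e n ^ 2 = 1 / w (b n) / b n := by
    filter_upwards [hbpos] with n hn
    have := hw (b n)
    simp only [he_def]
    rw [Real.sq_sqrt (by positivity)]
  have hρ2 : Tendsto (fun n => (1 - ρ n) / e n ^ 2) atTop (𝓝 (2 * lam ^ 2)) := by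
    refine hHR.congr' ?_
    filter_upwards [heq, hbpos] with n hn hn2
    have := hw (b n)
    rw [hn]
    field_simp
  have hus : ∀ s : ℝ, ∀ᶠ n in atTop, b n / 2 < 1 / w (b n) * s + b n := by
    intro s
    have h1 : Tendsto (fun n => 1 / w (b n) / b n * s) atTop (𝓝 (0 * s)) := hratio.mul_const s
    rw [zero_mul] at h1
    filter_upwards [h1.eventually_const_lt (show (-(1 / 2) : ℝ) < 0 by norm_num), hbpos] with n h2 h3
    have h4 : 1 / w (b n) * s = (1 / w (b n) / b n * s) * b n := by field_simp
    rw [h4]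
    nlinarith
  set g : ℕ → ℝ → ℝ := fun n θ => ρ n * Real.cos θ + √(1 - ρ n ^ 2) * Real.sin θ with hg_def
  have hgm : ∀ n, Measurable (g n) := fun n => by simp only [hg_def]; fun_prop
  set S : ℕ → Set ℝ := fun n => {θ | 0 < Real.cos θ ∧ 0 < g n θ} with hS_def
  have hSm : ∀ n, MeasurableSet (S n) := fun n =>
    (measurableSet_lt measurable_const Real.measurable_cos).inter
      (measurableSet_lt measurable_const (hgm n))
  set h : ℕ → ℝ → ℝ := fun n θ => max ((1 / w (b n) * x + b n) / Real.cos θ)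
    ((1 / w (b n) * y + b n) / g n θ) with hh_def
  have hhm : ∀ n, Measurable (h n) := fun n =>
    (measurable_const.div Real.measurable_cos).max (measurable_const.div (hgm n))
  have hcos := aux_cos e he he0
  have hg := aux_g ρ e he0 he lam hlam hρ2
  have hdct := aux_dct T hT hT0 l hl hp w hw hG b hb e he (fun n => Ioo (-π) π ∩ S n)
    (fun n => measurableSet_Ioo.inter (hSm n)) h hhm
    (fun t => max (x + t ^ 2 / 2) (y + (t - 2 * lam) ^ 2 / 2)) ?_ ?_ x (1 / π ^ 2) (by positivity) ?_
  · refine hdct.congr' ?_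
    filter_upwards [hus x, hus y, hbpos] with n h1 h2 h3
    have hev : μ {ω | 1 / w (b n) * x + b n < R ω * Real.cos (Θ ω) ∧
            1 / w (b n) * y + b n < ρ n * |R ω * Real.cos (Θ ω)| +
              Real.sqrt (1 - ρ n ^ 2) * (R ω * Real.sin (Θ ω))} =
        μ {ω | Θ ω ∈ S n ∧ h n (Θ ω) < R ω} := by
      apply measure_congr
      filter_upwards [hRpos] with ω hω
      apply propext
      change (_ ∧ _) ↔ ((0 < Real.cos (Θ ω) ∧ 0 < g n (Θ ω)) ∧ max _ _ < R ω)
      have hgg : ρ n * (R ω * Real.cos (Θ ω)) + Real.sqrt (1 - ρ n ^ 2) * (R ω * Real.sin (Θ ω))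
        = R ω * g n (Θ ω) := by simp only [hg_def]; ring
      constructor
      · rintro ⟨h4, h5⟩
        have h6 : 0 < R ω * Real.cos (Θ ω) := by linarith
        rw [abs_of_pos h6, hgg] at h5
        have h7 : 0 < R ω * g n (Θ ω) := by linarith
        have h8 := (pos_iff_pos_of_mul_pos h6).1 hω
        have h9 := (pos_iff_pos_of_mul_pos h7).1 hω
        refine ⟨⟨h8, h9⟩, max_lt ?_ ?_⟩
        · rwa [div_lt_iff₀ h8]
        · rwa [div_lt_iff₀ h9]
      · rintro ⟨⟨h8, h9⟩, h10⟩
        obtain ⟨h11, h12⟩ := max_lt_iff.1 h10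
        rw [div_lt_iff₀ h8] at h11
        rw [div_lt_iff₀ h9] at h12
        rw [abs_of_pos (mul_pos hω h8), hgg]
        exact ⟨h11, h12⟩
    rw [hev, aux_prob μ R Θ hRm hΘm hΘunif hindep (S n) (hSm n) (h n) (hhm n), hTdef]
    have : (2 * π) ≠ 0 := by positivity
    rw [mul_assoc, mul_inv_cancel_left₀ this]
  · intro t
    have h1 : Tendsto (fun n => e n * t) atTop (𝓝 (0 * t)) := he0.mul_const t
    rw [zero_mul] at h1
    have h2 := h1.eventually (Ioo_mem_nhds (neg_lt_zero.2 Real.pi_pos) Real.pi_pos)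
    have h3 := (aux_one _ e he0 he _ (hcos t)).eventually_const_lt zero_lt_one
    have h4 := (aux_one _ e he0 he _ (hg t)).eventually_const_lt zero_lt_one
    filter_upwards [h2, h3, h4] with n h5 h6 h7
    exact ⟨h5, h6, h7⟩
  · intro t
    have h1 := (aux_zlim _ e b (fun n => w (b n)) he0 he _ x (hcos t) (fun n => hw _) heq).max
      (aux_zlim _ e b (fun n => w (b n)) he0 he _ y (hg t) (fun n => hw _) heq)
    refine h1.congr fun n => ?_
    rw [← max_mul_of_nonneg _ _ (hw (b n)).le, max_sub_sub_right]
  · filter_upwards [hus x, heq, hbpos] with n h1 h2 h3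
    rintro t ⟨h4, h5, h6⟩
    have hwn := hw (b n)
    refine le_trans ?_ (le_max_left _ _)
    rw [le_div_iff₀ h5]
    have h7 := Real.cos_le_one_sub_mul_cos_sq (abs_le.2 ⟨h4.1.le, h4.2.le⟩)
    set Z := 2 / π ^ 2 * (e n * t) ^ 2 with hZ
    have hZ0 : 0 ≤ Z := by positivity
    have h8 : b n + (x + 1 / π ^ 2 * t ^ 2) / w (b n) = (1 / w (b n) * x + b n) + b n / 2 * Z := by
      rw [hZ, mul_pow, h2]
      field_simp
      ring
    rw [h8]
    have h9 : (1 / w (b n) * x + b n) + b n / 2 * Z ≤ (1 / w (b n) * x + b n) * (1 + Z) := by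
      nlinarith
    have h10 : (1 + Z) * Real.cos (e n * t) ≤ 1 := by nlinarith
    calc _ ≤ (1 / w (b n) * x + b n) * (1 + Z) * Real.cos (e n * t) := by gcongr
      _ = (1 / w (b n) * x + b n) * ((1 + Z) * Real.cos (e n * t)) := by ring
      _ ≤ (1 / w (b n) * x + b n) * 1 := by
        apply mul_le_mul_of_nonneg_left h10; linarith
      _ = _ := by ring

theorem aux_squeeze (A : ℕ → ℝ) (hA : ∀ n, 0 ≤ A n) (p : ℝ → ℕ → ℝ) (K : ℝ)
    (h : ∀ s, Tendsto (fun n => A n * p s n) atTop (𝓝 (K * Real.exp (-s))))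
    (h1 : ∀ s, 0 < s → ∀ᶠ n : ℕ in atTop, p s n ≤ 1 / (n : ℝ))
    (h2 : ∀ s, s < 0 → ∀ᶠ n : ℕ in atTop, 1 / (n : ℝ) ≤ p s n) :
    Tendsto (fun n : ℕ => A n * (1 / (n : ℝ))) atTop (𝓝 K) := by
  have hcont : Tendsto (fun s => K * Real.exp (-s)) (𝓝 0) (𝓝 K) := by
    have : Continuous (fun s => K * Real.exp (-s)) := by fun_prop
    simpa using this.tendsto 0
  rw [tendsto_order]
  constructor
  · intro c hc
    obtain ⟨s, hs, hs0⟩ : ∃ s, c < K * Real.exp (-s) ∧ 0 < s :=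
      (((hcont.mono_left (nhdsWithin_le_nhds (s := Ioi 0))).eventually_const_lt hc).and
        self_mem_nhdsWithin).exists
    filter_upwards [(h s).eventually_const_lt hs, h1 s hs0] with n h3 h4
    exact h3.trans_le (mul_le_mul_of_nonneg_left h4 (hA n))
  · intro c hc
    obtain ⟨s, hs, hs0⟩ : ∃ s, K * Real.exp (-s) < c ∧ s < 0 :=
      (((hcont.mono_left (nhdsWithin_le_nhds (s := Iio 0))).eventually_lt_const hc).and
        self_mem_nhdsWithin).exists
    filter_upwards [(h s).eventually_lt_const hs, h2 s hs0] with n h3 h4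
    exact (mul_le_mul_of_nonneg_left h4 (hA n)).trans_lt h3

theorem aux_pos_prob {Ω : Type*} [MeasurableSpace Ω] (μ : Measure Ω) [IsProbabilityMeasure μ]
    (R Θ : Ω → ℝ) (hΘm : Measurable Θ)
    (hΘunif : μ.map Θ = (ENNReal.ofReal (2 * π))⁻¹ • volume.restrict (Ioo (-π) π))
    (hindep : IndepFun R Θ μ) (v V : ℝ) (hv : 0 ≤ v) (hV : v < V)
    (hp : 0 < (μ {ω | V < R ω}).toReal) :
    0 < (μ {ω | v < R ω * Real.cos (Θ ω)}).toReal := by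
  have hV0 : 0 < V := by linarith
  have h1 : μ (R ⁻¹' (Ioi V) ∩ Θ ⁻¹' {θ | v / V < Real.cos θ}) =
      μ (R ⁻¹' (Ioi V)) * μ (Θ ⁻¹' {θ | v / V < Real.cos θ}) :=
    hindep.measure_inter_preimage_eq_mul _ _ measurableSet_Ioi
      (measurableSet_lt measurable_const Real.measurable_cos)
  have h2 : μ (Θ ⁻¹' {θ | v / V < Real.cos θ}) ≠ 0 := by
    rw [← Measure.map_apply hΘm (measurableSet_lt measurable_const Real.measurable_cos), hΘunif]
    have hopen : IsOpen {θ : ℝ | v / V < Real.cos θ} :=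
      isOpen_lt continuous_const Real.continuous_cos
    rw [Measure.smul_apply, Measure.restrict_apply hopen.measurableSet, smul_eq_mul]
    refine mul_ne_zero (ENNReal.inv_ne_zero.2 ENNReal.ofReal_ne_top) ?_
    refine ((hopen.inter isOpen_Ioo).measure_pos volume ⟨0, ?_, ?_⟩).ne'
    · simp only [mem_setOf_eq, Real.cos_zero]
      rwa [div_lt_one hV0]
    · exact ⟨neg_lt_zero.2 Real.pi_pos, Real.pi_pos⟩
  have h3 : μ (R ⁻¹' (Ioi V)) ≠ 0 := by
    intro h
    have : μ {ω | V < R ω} = 0 := h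
    rw [this] at hp
    simp at hp
  apply ENNReal.toReal_pos _ (measure_ne_top _ _)
  intro h4
  have h5 : μ (R ⁻¹' (Ioi V) ∩ Θ ⁻¹' {θ | v / V < Real.cos θ}) = 0 := by
    refine measure_mono_null ?_ h4
    rintro ω ⟨h6, h7⟩
    simp only [mem_preimage, mem_Ioi, mem_setOf_eq] at *
    rw [div_lt_iff₀ hV0] at h7
    have : 0 ≤ v / V := by positivity
    have hc : 0 < Real.cos (Θ ω) := by
      by_contra hc
      nlinarith
    nlinarith
  rw [h1] at h5
  exact (mul_ne_zero h3 h2) h5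

theorem joint_tail_half_skew_gumbel
{Ω : Type*} [MeasurableSpace Ω] (μ : Measure Ω) [IsProbabilityMeasure μ]
    (R Θ : Ω → ℝ) (hRm : Measurable R) (hΘm : Measurable Θ)
    (hRpos : ∀ᵐ ω ∂μ, 0 < R ω)
    (hΘunif : μ.map Θ = (ENNReal.ofReal (2 * π))⁻¹ • volume.restrict (Ioo (-π) π))
    (hindep : IndepFun R Θ μ)
    (X Y : Ω → ℝ)
    (hX : X = fun ω => R ω * Real.cos (Θ ω))
    (hY : Y = fun ω => R ω * Real.sin (Θ ω))
    (F G : ℝ → ℝ)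
    (hF : F = fun x => (μ {ω | R ω ≤ x}).toReal)
    (hG : G = fun x => (μ {ω | X ω ≤ x}).toReal)
    (w : ℝ → ℝ) (hw : ∀ x, 0 < w x)
    (l : Filter ℝ)
    (hendpoint : (l = atTop ∧ ∀ x, F x < 1) ∨
      (l = nhdsWithin 1 (Iio 1) ∧ (∀ x < 1, F x < 1) ∧ ∀ x, 1 ≤ x → F x = 1))
    (hGumbel : ∀ s : ℝ,
      Tendsto (fun u => (1 - F (u + s / w u)) / (1 - F u)) l (𝓝 (Real.exp (-s))))
    (b a : ℕ → ℝ)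
    (hb : ∀ n : ℕ, b n = sInf {x | 1 - 1 / (n : ℝ) < G x})
    (ha : ∀ n : ℕ, a n = 1 / w (b n))
    (ρ : ℕ → ℝ) (hρ : ∀ n, ρ n ∈ Ioc (0 : ℝ) 1)
    (lam : ℝ) (hlam : 0 < lam)
    (hHR : Tendsto (fun n : ℕ => (1 - ρ n) * b n / a n) atTop (𝓝 (2 * lam ^ 2))) :
    ∀ x y : ℝ,
      Tendsto (fun n : ℕ =>
          (n : ℝ) * (μ {ω | a n * x + b n < X ω ∧
            a n * y + b n < ρ n * |X ω| + Real.sqrt (1 - ρ n ^ 2) * Y ω}).toReal)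
        atTop (𝓝
          ((1 - stdNormalCDF (lam + (y - x) / (2 * lam))) * Real.exp (-x) +
           (1 - stdNormalCDF (lam + (x - y) / (2 * lam))) * Real.exp (-y))) := by
  have hXm : Measurable X := by rw [hX]; exact hRm.mul (Real.measurable_cos.comp hΘm)
  obtain ⟨T, hTdef⟩ : ∃ T : ℝ → ℝ, T = fun u => (μ {ω | u < R ω}).toReal := ⟨_, rfl⟩
  have hcompl : ∀ (Z : Ω → ℝ), Measurable Z → ∀ u,
      1 - (μ {ω | Z ω ≤ u}).toReal = (μ {ω | u < Z ω}).toReal := by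
    intro Z hZ u
    have h1 := prob_compl_eq_one_sub (μ := μ) (measurableSet_le hZ (measurable_const (a := u)))
    have h2 : {ω | Z ω ≤ u}ᶜ = {ω | u < Z ω} := by ext ω; simp
    rw [← h2, h1, ENNReal.toReal_sub_of_le prob_le_one ENNReal.one_ne_top, ENNReal.toReal_one]
  have hTF : ∀ u, 1 - F u = T u := by
    intro u; rw [hF, hTdef]; exact hcompl R hRm u
  have hGX : ∀ u, 1 - G u = (μ {ω | u < X ω}).toReal := by
    intro u; rw [hG]; exact hcompl X hXm u
  have hT : Antitone T := by
    intro u v huv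
    rw [hTdef]
    apply ENNReal.toReal_mono (measure_ne_top _ _)
    apply measure_mono
    intro ω hω
    exact lt_of_le_of_lt huv hω
  have hGmono : Monotone G := by
    intro u v huv
    rw [hG]
    apply ENNReal.toReal_mono (measure_ne_top _ _)
    apply measure_mono
    intro ω hω
    exact le_trans hω huv
  have hT0 : ∀ u, 0 ≤ T u := by intro u; rw [hTdef]; exact ENNReal.toReal_nonneg
  have hT1 : ∀ u ≤ 0, T u = 1 := by
    intro u hu
    rw [hTdef]
    have : μ {ω | u < R ω} = 1 := by
      rw [← mem_ae_iff_prob_eq_one (measurableSet_lt measurable_const hRm)]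
      filter_upwards [hRpos] with ω hω
      exact lt_of_le_of_lt hu hω
    simp [this]
  have hG' : ∀ s : ℝ, Tendsto (fun u => T (u + s / w u) / T u) l (𝓝 (Real.exp (-s))) := by
    intro s
    simpa only [hTF] using hGumbel s
  have hl : ∀ P : ℝ → Prop, (∀ᶠ u in l, P u) ↔ ∃ U, 0 < T U ∧ ∀ v, U ≤ v → 0 < T v → P v := by
    intro P
    rcases hendpoint with ⟨rfl, h⟩ | ⟨rfl, h, h'⟩
    · have hTp : ∀ u, 0 < T u := fun u => by rw [← hTF]; linarith [h u]
      rw [eventually_atTop]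
      constructor
      · rintro ⟨U, hU⟩
        exact ⟨U, hTp U, fun v hv _ => hU v hv⟩
      · rintro ⟨U, _, hU⟩
        exact ⟨U, fun v hv => hU v hv (hTp v)⟩
    · have hTp : ∀ u, 0 < T u ↔ u < 1 := by
        intro u
        rw [← hTF]
        constructor
        · intro h1
          by_contra hc
          rw [h' u (not_lt.1 hc)] at h1
          linarith
        · intro h1
          linarith [h u h1]
      change {u | P u} ∈ 𝓝[<] (1 : ℝ) ↔ _
      rw [mem_nhdsLT_iff_exists_Ico_subset]
      constructor
      · rintro ⟨U, hU, hU2⟩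
        exact ⟨U, (hTp U).2 hU, fun v hv hv0 => hU2 ⟨hv, (hTp v).1 hv0⟩⟩
      · rintro ⟨U, hU, hU2⟩
        exact ⟨U, (hTp U).1 hU, fun v hv => hU2 v hv.1 ((hTp v).2 hv.2)⟩
  have hTz := aux_tail_zero T hT hT0 l hl w hw hG'
  have hXT : ∀ u, (μ {ω | u < X ω}).toReal ≤ T (max u 0) := by
    intro u
    by_cases hu : 0 ≤ u
    · rw [max_eq_left hu, hTdef]
      apply ENNReal.toReal_mono (measure_ne_top _ _)
      apply measure_mono_ae
      filter_upwards [hRpos] with ω hω h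
      change u < X ω at h
      change u < R ω
      rw [hX] at h
      have := Real.cos_le_one (Θ ω)
      simp only at h
      nlinarith
    · rw [max_eq_right (not_le.1 hu).le, hT1 0 le_rfl]
      exact measureReal_le_one
  have hXpos : ∀ u, 0 < T u → 0 < (μ {ω | u < X ω}).toReal := by
    intro u hu
    obtain ⟨U1, hU1, hU1v⟩ := (hl _).1 ((hG' 1).eventually_const_lt (Real.exp_pos _))
    set v := max (max u U1) 0 with hv
    have hTv : 0 < T v := by
      rw [hv, hT.map_max, hT.map_max]
      exact lt_min (lt_min hu hU1) (by rw [hT1 0 le_rfl]; exact one_pos)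
    have hV := hU1v v ((le_max_right u U1).trans (le_max_left _ _)) hTv
    rw [lt_div_iff₀ hTv, zero_mul] at hV
    have hwv := hw v
    have h1 := aux_pos_prob μ R Θ hΘm hΘunif hindep v (v + 1 / w v) (le_max_right _ _)
      (by have : 0 < 1 / w v := by positivity
          linarith) (by rw [hTdef] at hV; exact hV)
    refine h1.trans_le ?_
    apply ENNReal.toReal_mono (measure_ne_top _ _)
    apply measure_mono
    intro ω hω
    have h2 : u ≤ v := (le_max_left u U1).trans (le_max_left _ _)
    rw [hX]
    exact lt_of_le_of_lt h2 hω
  have hne : ∀ n : ℕ, 1 ≤ n → ∃ U, 0 < T U ∧ 1 - 1 / (n : ℝ) < G U := by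
    intro n hn
    have hn' : (0 : ℝ) < 1 / n := by
      have : (0 : ℝ) < n := by exact_mod_cast hn
      positivity
    obtain ⟨U, hU, hUv⟩ := (hl _).1
      ((hTz.eventually_lt_const hn').and (aux_pos T hT1 l hTz))
    refine ⟨U, hU, ?_⟩
    obtain ⟨h1, h2⟩ := hUv U le_rfl hU
    have h3 := hXT U
    rw [max_eq_left h2.le, ← hGX] at h3
    linarith
  have hlow : ∀ U, 0 < T U → ∀ᶠ n : ℕ in atTop, U ∈ lowerBounds {x | 1 - 1 / (n : ℝ) < G x} := by
    intro U hU
    have h1 := hXpos U hU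
    rw [← hGX] at h1
    filter_upwards [tendsto_one_div_atTop_nhds_zero_nat.eventually_lt_const h1] with n hn
    intro v hv
    simp only [mem_setOf_eq] at hv
    by_contra hc
    have := hGmono (not_le.1 hc).le
    linarith
  have hbl : Tendsto b atTop l := by
    rw [tendsto_iff_eventually]
    intro P hP
    obtain ⟨U, hU, hUv⟩ := (hl P).1 hP
    filter_upwards [hlow U hU, eventually_ge_atTop 1] with n h1 h2
    obtain ⟨U0, hU0, hU0n⟩ := hne n h2
    apply hUv
    · rw [hb]
      exact le_csInf ⟨U0, hU0n⟩ h1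
    · refine hU0.trans_le (hT ?_)
      rw [hb]
      exact csInf_le ⟨U, h1⟩ hU0n
  have hbdd : ∀ᶠ n : ℕ in atTop, BddBelow {x | 1 - 1 / (n : ℝ) < G x} := by
    filter_upwards [hlow 0 (by rw [hT1 0 le_rfl]; exact one_pos)] with n hn
    exact ⟨0, hn⟩
  obtain ⟨A, hA⟩ : ∃ A : ℕ → ℝ, A = fun n => (√(1 / w (b n) / b n) * T (b n))⁻¹ * (2 * π) := ⟨_, rfl⟩
  have hA0 : ∀ n, 0 ≤ A n := by
    intro n
    rw [hA]
    have := hT0 (b n)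
    positivity
  have hmarg : ∀ s, Tendsto (fun n => A n * (μ {ω | 1 / w (b n) * s + b n < X ω}).toReal) atTop
      (𝓝 (√(2 * π) * Real.exp (-s))) := by
    intro s
    have h1 := aux_core μ R Θ hRm hΘm hRpos hΘunif hindep T hTdef hT hT0 hT1 l hl w hw hG' b hbl
      (fun _ => 1) 0 le_rfl (by simp) s s
    rw [aux_final0] at h1
    refine h1.congr fun n => ?_
    rw [hA, hX]
    congr 3
    ext ω
    simp only [mem_setOf_eq]
    constructor
    · exact fun h => h.1
    · intro h
      refine ⟨h, ?_⟩
      simp only [one_pow, sub_self, Real.sqrt_zero, zero_mul, add_zero, one_mul]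
      exact h.trans_le (le_abs_self _)
  have hAn := aux_squeeze A hA0 (fun s n => (μ {ω | 1 / w (b n) * s + b n < X ω}).toReal) (√(2 * π))
    hmarg ?_ ?_
  · intro x y
    have h1 := aux_core μ R Θ hRm hΘm hRpos hΘunif hindep T hTdef hT hT0 hT1 l hl w hw hG' b hbl
      ρ lam hlam.le (by simpa only [ha] using hHR) x y
    rw [aux_final x y lam hlam] at h1
    have hp : √(2 * π) ≠ 0 := by positivity
    have h2 := h1.div hAn hp
    rw [mul_div_cancel_left₀ _ hp] at h2
    refine h2.congr' ?_
    filter_upwards [hAn.eventually_ne hp] with n hn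
    simp only [Pi.div_apply]
    have hAne : A n ≠ 0 := left_ne_zero_of_mul hn
    rw [hX, hY, ha]
    change (√(1 / w (b n) / b n) * T (b n))⁻¹ * (2 * π) * _ / _ = _
    have hA' : (√(1 / w (b n) / b n) * T (b n))⁻¹ * (2 * π) = A n := by rw [hA]
    rw [hA', mul_div_mul_left _ _ hAne, div_div_eq_mul_div, div_one, mul_comm]
  · intro s hs
    filter_upwards [eventually_ge_atTop 1] with n hn
    obtain ⟨U0, hU0, hU0n⟩ := hne n hn
    have h1 : sInf {x | 1 - 1 / (n : ℝ) < G x} < 1 / w (b n) * s + b n := by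
      rw [← hb]
      have := hw (b n)
      have : 0 < 1 / w (b n) * s := by positivity
      linarith
    obtain ⟨v, hv, hv2⟩ := exists_lt_of_csInf_lt ⟨U0, hU0n⟩ h1
    have h2 := hGmono hv2.le
    simp only [mem_setOf_eq] at hv
    rw [← hGX]
    linarith
  · intro s hs
    filter_upwards [hbdd] with n hn
    have h1 : 1 / w (b n) * s + b n < sInf {x | 1 - 1 / (n : ℝ) < G x} := by
      rw [← hb]
      have := hw (b n)
      have : 1 / w (b n) * s < 0 := mul_neg_of_pos_of_neg (by positivity) hs
      linarith
    have h2 := notMem_of_lt_csInf h1 hn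
    simp only [mem_setOf_eq, not_lt] at h2
    rw [← hGX]
    linarith
end
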